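/- arXiv:0708.2227 — 2 statements merged into one kernel-verified Lean document; each statement's English description precedes it below -/
import Mathlib

section
/- Let (S, 𝒮) be a measurable space, P a probability measure on S, and X_1, …, X_n i.i.d. with law P. Let B be a separable Banach space of type 2 with constant C, i.e. for every finite sequence x_1, …, x_N ∈ B and independent Rademacher variables ε_1, …, ε_N (with P(ε_i = 1) = P(ε_i = −1) = 1/2), E‖Σ_{i=1}^N ε_i x_i‖² ≤ C Σ_{i=1}^N ‖x_i‖². Let H : S^k → B be a bounded, strongly measurable function, symmetric in its entries and P-canonical (i.e. ∫_S H(x_1, …, x_{k−1}, y) dP(y) = 0 for all x_1, …, x_{k−1} ∈ S), and let κ ≥ sup_{x_1,…,x_k ∈ S} ‖H(x_1, …, x_k)‖. Then there exist constants λ_0 and D depending only on k and C such that for all n ≥ k and all x ≥ 0, Pr{ ‖ Σ_{(i_1,…,i_k) ∈ I_n^k} H(X_{i_1}, …, X_{i_k}) ‖ ≥ x } ≤ D exp{ −(x/(λ_0 n^{k/2} κ))^{2/k} }. -/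
open MeasureTheory Finset
open scoped ENNReal
noncomputable section

/-- The set of `k`-tuples of pairwise distinct indices from `{1, …, n}`. -/
def injTuples (k n : ℕ) : Finset (Fin k → Fin n) :=
  Finset.univ.filter Function.Injective

open scoped BigOperators

/-- The sign attached to a boolean. -/
def sgn (b : Bool) : ℝ := if b then 1 else -1

lemma expect_cons {N : ℕ} {X : Type*} [Fintype X] (f : (Fin (N + 1) → X) → ℝ) :
    𝔼 e, f e = 𝔼 b : X, 𝔼 e : Fin N → X, f (Fin.cons b e) := by
  rw [← Finset.expect_product' (univ : Finset X) (univ : Finset (Fin N → X))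
    (fun b e => f (Fin.cons b e)), Finset.univ_product_univ]
  symm
  exact Fintype.expect_equiv (Fin.consEquiv (fun _ => X)) _ _ (fun i => rfl)

lemma expect_bool (f : Bool → ℝ) : 𝔼 b, f b = (f true + f false) / 2 := by
  rw [Fintype.expect_eq_sum_div_card]; simp

lemma two_point (a b c : ℝ) (h : |a - b| ≤ 2 * c) :
    (Real.exp a + Real.exp b) / 2 ≤ Real.exp ((a + b) / 2 + c ^ 2 / 2) := by
  have h1 : (Real.exp a + Real.exp b) / 2 = Real.exp ((a + b) / 2) * Real.cosh ((a - b) / 2) := by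
    rw [Real.cosh_eq, mul_div_assoc', mul_add, ← Real.exp_add, ← Real.exp_add]
    ring_nf
  rw [h1, Real.exp_add]
  gcongr
  refine (Real.cosh_le_exp_half_sq _).trans ?_
  have := abs_le.1 h
  have : ((a - b) / 2) ^ 2 ≤ c ^ 2 := sq_le_sq' (by linarith) (by linarith)
  exact Real.exp_le_exp.2 (by linarith)

lemma rad_exp {B : Type*} [NormedAddCommGroup B] [NormedSpace ℝ B] (t : ℝ) (ht : 0 ≤ t) :
    ∀ (N : ℕ) (v : Fin N → B) (w : B),
      𝔼 e : Fin N → Bool, Real.exp (t * ‖w + ∑ i, sgn (e i) • v i‖) ≤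
      Real.exp (t * (𝔼 e : Fin N → Bool, ‖w + ∑ i, sgn (e i) • v i‖)
        + t ^ 2 * (∑ i, ‖v i‖ ^ 2) / 2) := by
  intro N
  induction N with
  | zero => intro v w; simp
  | succ N ih =>
    intro v w
    rw [expect_cons, expect_cons]
    simp only [Fin.sum_univ_succ, Fin.cons_zero, Fin.cons_succ, ← add_assoc]
    set m : Bool → ℝ := fun b =>
      𝔼 e : Fin N → Bool, ‖w + sgn b • v 0 + ∑ i, sgn (e i) • v i.succ‖ with hm
    set V := ∑ i : Fin N, ‖v i.succ‖ ^ 2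
    have h1 : ∀ b, 𝔼 e : Fin N → Bool,
        Real.exp (t * ‖w + sgn b • v 0 + ∑ i, sgn (e i) • v i.succ‖) ≤
        Real.exp (t * m b + t ^ 2 * V / 2) := fun b => ih (fun i => v i.succ) (w + sgn b • v 0)
    have hmb : ∀ b b', m b ≤ m b' + 2 * ‖v 0‖ := by
      intro b b'
      rw [hm, ← Fintype.expect_const (ι := Fin N → Bool) (2 * ‖v 0‖), ← Finset.expect_add_distrib]
      refine Finset.expect_le_expect fun e _ => ?_
      have : w + sgn b • v 0 + ∑ i, sgn (e i) • v i.succ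
        = (w + sgn b' • v 0 + ∑ i, sgn (e i) • v i.succ) + (sgn b - sgn b') • v 0 := by
        rw [sub_smul]; abel
      rw [this]
      refine (norm_add_le _ _).trans ?_
      gcongr
      rw [norm_smul]
      gcongr
      cases b <;> cases b' <;> simp [sgn] <;> norm_num
    refine (Finset.expect_le_expect fun b _ => h1 b).trans ?_
    rw [expect_bool, expect_bool]
    have h2 := two_point (t * m true + t ^ 2 * V / 2) (t * m false + t ^ 2 * V / 2) (t * ‖v 0‖) (by
      have e1 := hmb true false
      have e2 := hmb false true
      rw [abs_le]
      constructor <;> nlinarith)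
    refine h2.trans (le_of_eq ?_)
    congr 1
    ring

lemma expect_sq_le {ι : Type*} [Fintype ι] [Nonempty ι] (f : ι → ℝ) :
    (𝔼 i, f i) ^ 2 ≤ 𝔼 i, f i ^ 2 := by
  have := Finset.expect_nonneg (s := (univ : Finset ι)) (f := fun i => (f i - 𝔼 j, f j) ^ 2)
    (fun i _ => sq_nonneg _)
  have h2 : 𝔼 i, (f i - 𝔼 j, f j) ^ 2 = 𝔼 i, f i ^ 2 - (𝔼 i, f i) ^ 2 := by
    simp only [sub_sq, Finset.expect_sub_distrib, Finset.expect_add_distrib,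
      Fintype.expect_const, ← Finset.expect_mul, ← Finset.mul_expect]
    ring
  linarith

/-- Type 2 with constant `C`. -/
def IsType2 (B : Type*) [NormedAddCommGroup B] [NormedSpace ℝ B] (C : ℝ) : Prop :=
  ∀ (N : ℕ) (x : Fin N → B),
        ((2 : ℝ) ^ N)⁻¹ *
            ∑ ε : Fin N → Bool, ‖∑ i, (if ε i then x i else -x i)‖ ^ 2 ≤
          C * ∑ i, ‖x i‖ ^ 2

lemma rad_mean {B : Type*} [NormedAddCommGroup B] [NormedSpace ℝ B] (C : ℝ)
    (hB : IsType2 B C) (N : ℕ) (v : Fin N → B) :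
    𝔼 e : Fin N → Bool, ‖∑ i, sgn (e i) • v i‖ ≤ Real.sqrt (C * ∑ i, ‖v i‖ ^ 2) := by
  apply Real.le_sqrt_of_sq_le
  refine (expect_sq_le _).trans ?_
  refine le_trans (le_of_eq ?_) (hB N v)
  rw [Fintype.expect_eq_sum_div_card, div_eq_inv_mul]
  congr 1
  · simp
  · refine Finset.sum_congr rfl fun e _ => ?_
    congr 2
    refine Finset.sum_congr rfl fun i _ => ?_
    unfold sgn
    cases e i <;> simp

lemma rad_moment {B : Type*} [NormedAddCommGroup B] [NormedSpace ℝ B] (C : ℝ) (hC : 0 < C)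
    (hB : IsType2 B C) (N : ℕ) (v : Fin N → B) (q : ℕ) (hq : 1 ≤ q) :
    𝔼 e : Fin N → Bool, ‖∑ i, sgn (e i) • v i‖ ^ (2 * q) ≤
      (Real.exp (2 * Real.sqrt C + 1) * (2 * q) * ∑ i, ‖v i‖ ^ 2) ^ q := by
  set V := ∑ i, ‖v i‖ ^ 2 with hV
  have hV0 : 0 ≤ V := by positivity
  rcases hV0.eq_or_lt with h0 | hpos
  · have hv : ∀ i, v i = 0 := by
      intro i
      have := (Finset.sum_eq_zero_iff_of_nonneg (s := univ) (f := fun i => ‖v i‖ ^ 2)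
        (fun i _ => by positivity)).1 (hV ▸ h0.symm) i (mem_univ _)
      simpa using this
    simp [hv, ← h0, show q ≠ 0 by omega]
  have hq' : (1 : ℝ) ≤ q := by exact_mod_cast hq
  set p : ℝ := 2 * q with hp
  have hp0 : 0 < p := by positivity
  set t := Real.sqrt (p / V) with ht
  have ht0 : 0 < t := by positivity
  have ht2 : t ^ 2 = p / V := Real.sq_sqrt (by positivity)
  have hpt : (p / t) ^ 2 = p * V := by
    rw [div_pow, ht2]; field_simp
  have key : ∀ x : ℝ, 0 ≤ x → x ^ (2 * q) ≤ (p * V) ^ q * Real.exp (t * x) := by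
    intro x hx
    have h1 : t * x / p ≤ Real.exp (t * x / p) := by
      have := Real.add_one_le_exp (t * x / p); linarith
    have h2 : x = (p / t) * (t * x / p) := by field_simp
    have h3 : Real.exp (t * x) = Real.exp (t * x / p) ^ (2 * q) := by
      rw [← Real.exp_nat_mul]; congr 1; push_cast; rw [← hp]; field_simp
    rw [h3, ← hpt, ← pow_mul, ← mul_pow]
    conv_lhs => rw [h2]
    gcongr
  have hexp := rad_exp t ht0.le N v 0
  simp only [zero_add] at hexp
  calc _ ≤ 𝔼 e : Fin N → Bool, (p * V) ^ q * Real.exp (t * ‖∑ i, sgn (e i) • v i‖) :=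
        Finset.expect_le_expect fun e _ => key _ (norm_nonneg _)
    _ = (p * V) ^ q * 𝔼 e : Fin N → Bool, Real.exp (t * ‖∑ i, sgn (e i) • v i‖) := by
        rw [Finset.mul_expect]
    _ ≤ (p * V) ^ q * Real.exp (2 * Real.sqrt C + 1) ^ q := by
        gcongr
        refine hexp.trans ?_
        rw [← Real.exp_nat_mul]
        gcongr
        have hm := rad_mean C hB N v
        rw [← hV] at hm ⊢
        have h4 : t ^ 2 * V = p := by rw [ht2]; field_simp
        have h5 : t * Real.sqrt (C * V) ≤ p * Real.sqrt C := by
          rw [ht, ← Real.sqrt_mul (by positivity), show p / V * (C * V) = p * C by field_simp,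
            Real.sqrt_mul hp0.le]
          gcongr
          rw [Real.sqrt_le_left hp0.le]
          nlinarith
        have h6 := mul_le_mul_of_nonneg_left hm ht0.le
        rw [h4]
        nlinarith
    _ = _ := by rw [← mul_pow]; congr 1; ring

lemma sum_tuple_cons {N : ℕ} {X : Type*} [Fintype X] {B : Type*} [AddCommMonoid B]
    (f : (Fin (N + 1) → X) → B) :
    ∑ e, f e = ∑ b : X, ∑ e : Fin N → X, f (Fin.cons b e) := by
  rw [← Fintype.sum_prod_type']
  symm
  exact Fintype.sum_equiv (Fin.consEquiv (fun _ => X)) _ _ (fun i => rfl)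

lemma decoupled {B : Type*} [NormedAddCommGroup B] [NormedSpace ℝ B] (C : ℝ) (hC : 0 < C)
    (hB : IsType2 B C) (n : ℕ) (q : ℕ) (hq : 1 ≤ q) (κ : ℝ) :
    ∀ (k : ℕ) (a : (Fin k → Fin n) → B), (∀ i, ‖a i‖ ≤ κ) →
    𝔼 e : Fin k → Fin n → Bool, ‖∑ i, (∏ j, sgn (e j (i j))) • a i‖ ^ (2 * q) ≤
      ((Real.exp (2 * Real.sqrt C + 1) * (2 * q) * n) ^ k) ^ q * κ ^ (2 * q) := by
  intro k
  induction k with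
  | zero =>
    intro a ha
    simp
    gcongr
    exact ha _
  | succ k ih =>
    intro a ha
    set K := Real.exp (2 * Real.sqrt C + 1) with hK
    have hK0 : 0 < K := Real.exp_pos _
    rw [expect_cons, Finset.expect_comm]
    set v : (Fin k → Fin n → Bool) → Fin n → B := fun e l =>
      ∑ i : Fin k → Fin n, (∏ j, sgn (e j (i j))) • a (Fin.cons l i) with hv
    have h1 : ∀ (b : Fin n → Bool) (e : Fin k → Fin n → Bool),
        ∑ i : Fin (k + 1) → Fin n, (∏ j, sgn ((Fin.cons b e : Fin (k + 1) → Fin n → Bool) j (i j)))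
          • a i = ∑ l, sgn (b l) • v e l := by
      intro b e
      rw [sum_tuple_cons]
      refine Finset.sum_congr rfl fun l _ => ?_
      rw [hv, Finset.smul_sum]
      refine Finset.sum_congr rfl fun i _ => ?_
      rw [Fin.prod_univ_succ, smul_smul]
      simp
    simp only [h1]
    obtain ⟨m, rfl⟩ : ∃ m, q = m + 1 := ⟨q - 1, by omega⟩
    have h2 : ∀ e, 𝔼 b : Fin n → Bool, ‖∑ l, sgn (b l) • v e l‖ ^ (2 * (m + 1)) ≤
        (K * (2 * (m + 1 : ℕ))) ^ (m + 1) * ((n : ℝ) ^ m * ∑ l, ‖v e l‖ ^ (2 * (m + 1))) := by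
      intro e
      refine (rad_moment C hC hB n (v e) (m + 1) hq).trans ?_
      rw [mul_pow]
      gcongr
      have := pow_sum_div_card_le_sum_pow (s := (univ : Finset (Fin n)))
        (f := fun l => ‖v e l‖ ^ 2) (fun l _ => by positivity) m
      simp only [← pow_mul, card_univ, Fintype.card_fin] at this
      rcases Nat.eq_zero_or_pos n with hn | hn
      · subst hn; simp
      · have hn' : (0 : ℝ) < (n : ℝ) ^ m := by positivity
        rw [div_le_iff₀ hn'] at this
        linarith
    refine (Finset.expect_le_expect fun e _ => h2 e).trans ?_
    rw [← Finset.mul_expect, ← Finset.mul_expect, Finset.expect_sum_comm]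
    calc _ ≤ (K * (2 * (m + 1 : ℕ))) ^ (m + 1) * ((n : ℝ) ^ m * ∑ l : Fin n,
          ((K * (2 * (m + 1 : ℕ)) * n) ^ k) ^ (m + 1) * κ ^ (2 * (m + 1))) := by
          gcongr with l
          exact ih _ (fun i => ha _)
      _ = _ := by
          rw [Finset.sum_const, card_univ, Fintype.card_fin, nsmul_eq_mul]
          rw [pow_succ _ k, mul_pow _ (K * (2 * (m + 1 : ℕ)) * n) (m + 1),
            mul_pow _ (n : ℝ) (m + 1), pow_succ (n : ℝ) m]
          ring

lemma card_color {k n : ℕ} (i : Fin k → Fin n) (hi : Function.Injective i) :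
    #(univ.filter fun c : Fin n → Fin k => ∀ j, c (i j) = j) * k ^ k = k ^ n := by
  have h1 : (univ.filter fun c : Fin n → Fin k => ∀ j, c (i j) = j) =
      Fintype.piFinset (fun l => univ.filter fun x : Fin k => ∀ j, i j = l → x = j) := by
    ext c
    simp only [mem_filter, mem_univ, true_and, Fintype.mem_piFinset]
    constructor
    · rintro h l j rfl; exact h j
    · intro h j; exact h (i j) j rfl
  have h2 : k ^ k = ∏ l : Fin n, if l ∈ univ.image i then k else 1 := by
    rw [Finset.prod_ite_mem, Finset.univ_inter, Finset.prod_const, card_image_of_injective _ hi]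
    simp
  rw [h1, Fintype.card_piFinset, h2, ← Finset.prod_mul_distrib]
  have h3 : k ^ n = ∏ l : Fin n, k := by simp
  rw [h3]
  refine Finset.prod_congr rfl fun l _ => ?_
  by_cases hl : l ∈ univ.image i
  · obtain ⟨j, -, rfl⟩ := mem_image.1 hl
    rw [if_pos hl]
    have : (univ.filter fun x : Fin k => ∀ j', i j' = i j → x = j') = {j} := by
      ext x
      simp only [mem_filter, mem_univ, true_and, mem_singleton]
      constructor
      · intro h; exact h j rfl
      · rintro rfl j' h; exact (hi h).symm
    rw [this]; simp
  · rw [if_neg hl]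
    have : (univ.filter fun x : Fin k => ∀ j', i j' = l → x = j') = univ := by
      ext x
      simp only [mem_filter, mem_univ, true_and, iff_true]
      intro j h
      exact absurd (mem_image.2 ⟨j, mem_univ _, h⟩) hl
    rw [this]; simp

lemma expect_pow_le_aux {ι : Type*} [Fintype ι] [Nonempty ι] (f : ι → ℝ) (hf : ∀ i, 0 ≤ f i)
    (p : ℕ) : (𝔼 i, f i) ^ p ≤ 𝔼 i, f i ^ p := by
  have := Real.pow_arith_mean_le_arith_mean_pow (univ : Finset ι)
    (fun _ => (Fintype.card ι : ℝ)⁻¹) f (fun i _ => by positivity) (by simp) (fun i _ => hf i) p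
  rwa [← Finset.mul_sum, ← Finset.mul_sum, ← div_eq_inv_mul, ← div_eq_inv_mul,
    ← Fintype.expect_eq_sum_div_card, ← Fintype.expect_eq_sum_div_card] at this

lemma color_sum {B : Type*} [NormedAddCommGroup B] [NormedSpace ℝ B] {k n : ℕ} (hk : 1 ≤ k)
    (t : (Fin k → Fin n) → B) :
    ‖∑ i ∈ injTuples k n, t i‖ ≤ (k : ℝ) ^ k *
      𝔼 c : Fin n → Fin k, ‖∑ i, if (∀ j, c (i j) = j) then t i else 0‖ := by
  have hk0 : (0 : ℝ) < k := by exact_mod_cast hk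
  have h1 : ∑ c : Fin n → Fin k, ∑ i, (if (∀ j, c (i j) = j) then t i else 0) =
      ((k : ℝ) ^ n / (k : ℝ) ^ k) • ∑ i ∈ injTuples k n, t i := by
    rw [Finset.sum_comm, injTuples, Finset.sum_filter, Finset.smul_sum]
    refine Finset.sum_congr rfl fun i _ => ?_
    rw [← Finset.sum_filter, Finset.sum_const]
    split_ifs with hi
    · have := card_color i hi
      have h' : (#(univ.filter fun c : Fin n → Fin k => ∀ j, c (i j) = j) : ℝ) * (k : ℝ) ^ k
        = (k : ℝ) ^ n := by exact_mod_cast this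
      rw [← h', mul_div_cancel_right₀ _ (by positivity), Nat.cast_smul_eq_nsmul]
    · have : (univ.filter fun c : Fin n → Fin k => ∀ j, c (i j) = j) = ∅ := by
        rw [Finset.filter_eq_empty_iff]
        intro c _ h
        exact hi (Function.LeftInverse.injective (g := c) h)
      rw [this]; simp
  have h2 : ∑ i ∈ injTuples k n, t i = ((k : ℝ) ^ k / (k : ℝ) ^ n) •
      ∑ c : Fin n → Fin k, ∑ i, (if (∀ j, c (i j) = j) then t i else 0) := by
    rw [h1, smul_smul, div_mul_div_cancel₀ (by positivity), div_self (by positivity), one_smul]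
  rw [h2, norm_smul, Fintype.expect_eq_sum_div_card, Real.norm_of_nonneg (by positivity)]
  rw [div_mul_eq_mul_div, mul_div_assoc]
  rw [show (Fintype.card (Fin n → Fin k) : ℝ) = (k : ℝ) ^ n by simp]
  gcongr
  exact norm_sum_le _ _

lemma expect_select {k n : ℕ} (c : Fin n → Fin k) (F : (Fin n → Bool) → ℝ) :
    𝔼 e, F e = 𝔼 e : Fin k → Fin n → Bool, F (fun l => e (c l) l) := by
  have h1 : ∀ d : Fin n → Bool, 𝔼 e : Fin k → Fin n → Bool, F (fun l => e (c l) l) =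
      𝔼 e : Fin k → Fin n → Bool, F (fun l => xor (d l) (e (c l) l)) := by
    intro d
    have hinv : Function.Involutive
        (fun (e : Fin k → Fin n → Bool) (j : Fin k) (l : Fin n) => xor (d l) (e j l)) := by
      intro e; funext j l; simp
    symm
    exact Fintype.expect_equiv hinv.toPerm _ _ (fun e => rfl)
  have h2 : ∀ e : Fin k → Fin n → Bool,
      𝔼 d : Fin n → Bool, F (fun l => xor (d l) (e (c l) l)) = 𝔼 d, F d := by
    intro e
    have hinv : Function.Involutive
        (fun (d : Fin n → Bool) (l : Fin n) => xor (d l) (e (c l) l)) := by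
      intro e; funext l; simp
    exact Fintype.expect_equiv hinv.toPerm _ _ (fun e => rfl)
  calc 𝔼 e, F e = 𝔼 e : Fin k → Fin n → Bool, 𝔼 d : Fin n → Bool,
        F (fun l => xor (d l) (e (c l) l)) := by
        simp only [h2, Fintype.expect_const]
    _ = 𝔼 d : Fin n → Bool, 𝔼 e : Fin k → Fin n → Bool, F (fun l => xor (d l) (e (c l) l)) :=
        Finset.expect_comm _ _ _
    _ = _ := by simp only [← h1, Fintype.expect_const]

lemma chaos_moment {B : Type*} [NormedAddCommGroup B] [NormedSpace ℝ B] (C : ℝ) (hC : 0 < C)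
    (hB : IsType2 B C) (n : ℕ) (q : ℕ) (hq : 1 ≤ q) (κ : ℝ) (hκ : 0 ≤ κ)
    (k : ℕ) (hk : 1 ≤ k) (a : (Fin k → Fin n) → B) (ha : ∀ i, ‖a i‖ ≤ κ) :
    𝔼 e : Fin n → Bool, ‖∑ i ∈ injTuples k n, (∏ j, sgn (e (i j))) • a i‖ ^ (2 * q) ≤
      ((k : ℝ) ^ k) ^ (2 * q) *
      (((Real.exp (2 * Real.sqrt C + 1) * (2 * q) * n) ^ k) ^ q * κ ^ (2 * q)) := by
  have : Nonempty (Fin k) := ⟨⟨0, hk⟩⟩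
  set Q : (Fin n → Fin k) → (Fin n → Bool) → ℝ := fun c e =>
    ‖∑ i, if (∀ j, c (i j) = j) then (∏ j, sgn (e (i j))) • a i else 0‖ with hQ
  have h1 : ∀ e : Fin n → Bool,
      ‖∑ i ∈ injTuples k n, (∏ j, sgn (e (i j))) • a i‖ ^ (2 * q) ≤
      ((k : ℝ) ^ k) ^ (2 * q) * 𝔼 c, Q c e ^ (2 * q) := by
    intro e
    calc _ ≤ ((k : ℝ) ^ k * 𝔼 c, Q c e) ^ (2 * q) := by
          gcongr
          exact color_sum hk _
      _ ≤ _ := by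
          rw [mul_pow]
          gcongr
          exact expect_pow_le_aux _ (fun _ => norm_nonneg _) _
  refine (Finset.expect_le_expect fun e _ => h1 e).trans ?_
  rw [← Finset.mul_expect, Finset.expect_comm]
  gcongr
  refine Finset.expect_le univ_nonempty fun c _ => ?_
  rw [expect_select c]
  refine le_trans (le_of_eq ?_) (decoupled C hC hB n q hq κ k
    (fun i => if (∀ j, c (i j) = j) then a i else 0) ?_)
  · refine Finset.expect_congr rfl fun e _ => ?_
    rw [hQ]
    dsimp only
    congr 2
    refine Finset.sum_congr rfl fun i _ => ?_
    split_ifs with h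
    · congr 1
      refine Finset.prod_congr rfl fun j _ => ?_
      rw [h j]
    · simp
  · intro i
    split_ifs
    · exact ha i
    · simpa using hκ

lemma sign_induction {n : ℕ} (J : (Fin n → ℝ) → ℝ)
    (hJ : ∀ (s : Fin n → ℝ) (l : Fin n), J s ≤
      (J (Function.update s l (2 * s l)) + J (Function.update s l (-2 * s l))) / 2) :
    J (fun _ => 1) ≤ 𝔼 e : Fin n → Bool, J (fun l => 2 * sgn (e l)) := by
  have main : ∀ T : Finset (Fin n), J (fun _ => 1) ≤
      𝔼 e : Fin n → Bool, J (fun l => if l ∈ T then 2 * sgn (e l) else 1) := by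
    intro T
    induction T using Finset.induction_on with
    | empty => simp
    | insert l T hl ih =>
      refine ih.trans ?_
      set G : (Fin n → Bool) → ℝ := fun e =>
        J (fun l' => if l' ∈ insert l T then 2 * sgn (e l') else 1) with hG
      have hinv : Function.Involutive
          (fun (e : Fin n → Bool) => Function.update e l (!(e l))) := by
        intro e; simp
      have h1 : 𝔼 e, G (Function.update e l (!(e l))) = 𝔼 e, G e :=
        Fintype.expect_equiv hinv.toPerm _ _ (fun e => rfl)
      have h2 : ∀ e : Fin n → Bool, J (fun l => if l ∈ T then 2 * sgn (e l) else 1) ≤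
          (G e + G (Function.update e l (!(e l)))) / 2 := by
        intro e
        have key : ∀ b : Bool, Function.update (fun l => if l ∈ T then 2 * sgn (e l) else 1) l
            (2 * sgn b) = fun l' => if l' ∈ insert l T then
              2 * sgn (Function.update e l b l') else 1 := by
          intro b
          funext l'
          by_cases h : l' = l
          · subst h; simp
          · simp [h]
        have h3 := hJ (fun l => if l ∈ T then 2 * sgn (e l) else 1) l
        have ht := key true
        have hf := key false
        simp only [sgn, if_true, Bool.false_eq_true, if_false] at ht hf
        simp only [if_neg hl, sgn, mul_one] at h3 ⊢
        rw [show (2 : ℝ) * -1 = -2 by norm_num] at hf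
        rw [mul_one] at ht
        have h4 : J (fun l => if l ∈ T then 2 * (if e l then 1 else -1) else 1) ≤
            (G (Function.update e l true) + G (Function.update e l false)) / 2 := by
          rw [ht, hf] at h3
          exact h3
        refine h4.trans (le_of_eq ?_)
        rcases hb : e l with _ | _
        · have : G e = G (Function.update e l false) := by rw [← hb, Function.update_eq_self]
          rw [this, add_comm]; rfl
        · have : G e = G (Function.update e l true) := by rw [← hb, Function.update_eq_self]
          rw [this]; rfl
      refine (Finset.expect_le_expect fun e _ => h2 e).trans (le_of_eq ?_)
      rw [← Finset.expect_div, Finset.expect_add_distrib, h1]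
      ring
  simpa using main univ

lemma one_var {B : Type*} [NormedAddCommGroup B] [NormedSpace ℝ B] [CompleteSpace B]
    {S : Type*} [MeasurableSpace S] (P : Measure S) [IsProbabilityMeasure P]
    (u : B) (v : S → B) (hv : StronglyMeasurable v) (M : ℝ) (hM : ∀ y, ‖v y‖ ≤ M)
    (h0 : ∫ y, v y ∂P = 0) (p : ℕ) :
    ∫ y, ‖u + v y‖ ^ p ∂P ≤
      ∫ y, (‖u + (2 : ℝ) • v y‖ ^ p + ‖u + (-2 : ℝ) • v y‖ ^ p) / 2 ∂P := by
  have hvi : Integrable v P := Integrable.of_bound hv.aestronglyMeasurable M (.of_forall hM)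
  have hint : ∀ r : ℝ, ∀ p : ℕ, Integrable (fun y => ‖u + r • v y‖ ^ p) P := by
    intro r p
    refine Integrable.of_bound (C := (‖u‖ + |r| * M) ^ p) ?_ (.of_forall fun y => ?_)
    · exact ((stronglyMeasurable_const.add (hv.const_smul r)).norm.pow p).aestronglyMeasurable
    · rw [norm_pow, norm_norm]
      gcongr
      refine (norm_add_le _ _).trans ?_
      rw [norm_smul, Real.norm_eq_abs]
      gcongr
      exact hM y
  have hint1 : Integrable (fun y => ‖u + v y‖ ^ p) P := by simpa using hint 1 p
  have hj : ‖u‖ ^ p ≤ ∫ y, ‖u + (-2 : ℝ) • v y‖ ^ p ∂P := by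
    have e1 : u = ∫ y, (u + (-2 : ℝ) • v y) ∂P := by
      rw [integral_add (integrable_const _) (hvi.fun_smul (-2 : ℝ)), integral_smul, h0]; simp
    have e2 : ‖u‖ ≤ ∫ y, ‖u + (-2 : ℝ) • v y‖ ∂P := by
      conv_lhs => rw [e1]
      exact norm_integral_le_integral_norm _
    have e3 : (∫ y, ‖u + (-2 : ℝ) • v y‖ ∂P) ^ p ≤ ∫ y, ‖u + (-2 : ℝ) • v y‖ ^ p ∂P := by
      refine (convexOn_pow p).map_integral_le (g := fun x : ℝ => x ^ p)
        (f := fun y => ‖u + (-2 : ℝ) • v y‖) (continuous_pow p).continuousOn isClosed_Ici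
        (.of_forall fun y => norm_nonneg _) ?_ (hint (-2) p)
      simpa using hint (-2) 1
    exact (pow_le_pow_left₀ (norm_nonneg _) e2 p).trans e3
  have hpt : ∀ y, ‖u + v y‖ ^ p ≤ ‖u + (2 : ℝ) • v y‖ ^ p / 2 + ‖u‖ ^ p / 2 := by
    intro y
    have e1 : ‖u + v y‖ ≤ (1 / 2) * ‖u + (2 : ℝ) • v y‖ + (1 / 2) * ‖u‖ := by
      have : u + v y = (1 / 2 : ℝ) • (u + (2 : ℝ) • v y) + (1 / 2 : ℝ) • u := by
        module
      rw [this]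
      refine (norm_add_le _ _).trans ?_
      rw [norm_smul, norm_smul]
      norm_num
    have e2 := (convexOn_pow (𝕜 := ℝ) p).2 (Set.mem_Ici.2 (norm_nonneg (u + (2 : ℝ) • v y)))
      (Set.mem_Ici.2 (norm_nonneg u)) (by norm_num : (0 : ℝ) ≤ 1 / 2)
      (by norm_num : (0 : ℝ) ≤ 1 / 2) (by norm_num)
    simp only [smul_eq_mul] at e2
    have := (pow_le_pow_left₀ (norm_nonneg _) e1 p).trans e2
    linarith
  calc _ ≤ ∫ y, (‖u + (2 : ℝ) • v y‖ ^ p / 2 + ‖u‖ ^ p / 2) ∂P :=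
        integral_mono hint1 (((hint 2 p).div_const 2).add (integrable_const _)) hpt
    _ = (∫ y, ‖u + (2 : ℝ) • v y‖ ^ p ∂P) / 2 + ‖u‖ ^ p / 2 := by
        rw [integral_add ((hint 2 p).div_const 2) (integrable_const _), integral_div]; simp
    _ ≤ (∫ y, ‖u + (2 : ℝ) • v y‖ ^ p ∂P) / 2 + (∫ y, ‖u + (-2 : ℝ) • v y‖ ^ p ∂P) / 2 := by
        gcongr
    _ = _ := by
        rw [integral_div, integral_add (hint 2 p) (hint (-2) p)]; ring

/-- The U-statistic with multipliers. -/
def ustat {B : Type*} [NormedAddCommGroup B] [NormedSpace ℝ B] {S : Type*} {k n : ℕ}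
    (H : (Fin k → S) → B) (s : Fin n → ℝ) (ω : Fin n → S) : B :=
  ∑ i ∈ injTuples k n, (∏ j, s (i j)) • H (ω ∘ i)

section
variable {B : Type*} [NormedAddCommGroup B] [NormedSpace ℝ B] [CompleteSpace B]
    {S : Type*} [MeasurableSpace S] (P : Measure S) [IsProbabilityMeasure P]
    {k n : ℕ} (H : (Fin k → S) → B)

lemma comp_sm (hH : StronglyMeasurable H) (i : Fin k → Fin n) :
    StronglyMeasurable (fun ω : Fin n → S => H (ω ∘ i)) :=
  hH.comp_measurable (measurable_pi_lambda _ fun j => measurable_pi_apply (i j))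

lemma ustat_sm (hH : StronglyMeasurable H) (s : Fin n → ℝ) :
    StronglyMeasurable (ustat H s) :=
  Finset.stronglyMeasurable_fun_sum _ fun i _ => (comp_sm H hH i).const_smul _

lemma ustat_bound (κ : ℝ) (hκ : ∀ x, ‖H x‖ ≤ κ) (s : Fin n → ℝ) :
    ∃ M, 0 ≤ M ∧ ∀ ω, ‖ustat H s ω‖ ≤ M := by
  refine ⟨∑ i ∈ injTuples k n, ‖∏ j, s (i j)‖ * |κ|, by positivity, fun ω => ?_⟩
  refine (norm_sum_le _ _).trans (Finset.sum_le_sum fun i _ => ?_)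
  rw [norm_smul]
  gcongr
  exact (hκ _).trans (le_abs_self _)

lemma ustat_int (hH : StronglyMeasurable H) (κ : ℝ) (hκ : ∀ x, ‖H x‖ ≤ κ) (s : Fin n → ℝ)
    (p : ℕ) : Integrable (fun ω => ‖ustat H s ω‖ ^ p) (Measure.pi fun _ : Fin n => P) := by
  obtain ⟨M, hM0, hM⟩ := ustat_bound H κ hκ s
  refine Integrable.of_bound (C := M ^ p)
    ((ustat_sm H hH s).norm.pow p).aestronglyMeasurable (.of_forall fun ω => ?_)
  rw [norm_pow, norm_norm]
  gcongr
  exact hM ω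

lemma ustat_split (s : Fin n → ℝ) (l : Fin n) (ω : Fin n → S) (r : ℝ) (y : S) :
    ustat H (Function.update s l (r * s l)) (Function.update ω l y) =
      (∑ i ∈ injTuples k n, if (∃ j, i j = l) then 0 else (∏ j, s (i j)) • H (ω ∘ i)) +
      r • ∑ i ∈ injTuples k n, if (∃ j, i j = l) then
        (∏ j, s (i j)) • H (Function.update ω l y ∘ i) else 0 := by
  rw [Finset.smul_sum, ← Finset.sum_add_distrib, ustat]
  refine Finset.sum_congr rfl fun i hi => ?_
  have hinj : Function.Injective i := (mem_filter.1 hi).2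
  split_ifs with h
  · obtain ⟨j, rfl⟩ := h
    rw [zero_add, smul_smul]
    congr 1
    rw [← Finset.mul_prod_erase univ _ (mem_univ j), ← Finset.mul_prod_erase univ (fun j => s (i j))
      (mem_univ j), Function.update_self, mul_assoc]
    congr 2
    refine Finset.prod_congr rfl fun j' hj' => ?_
    rw [Function.update_of_ne]
    intro hh
    exact (mem_erase.1 hj').1 (hinj hh)
  · rw [smul_zero, add_zero]
    push Not at h
    congr 1
    · refine Finset.prod_congr rfl fun j' _ => ?_
      rw [Function.update_of_ne (h j')]
    · congr 1
      funext j'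
      simp [Function.update_of_ne (h j')]

lemma ustat_step (hH : StronglyMeasurable H) (κ : ℝ) (hκ : ∀ x, ‖H x‖ ≤ κ)
    (hcan : ∀ (j : Fin k) (x : Fin k → S), (∫ y, H (Function.update x j y) ∂P) = 0)
    (p : ℕ) (s : Fin n → ℝ) (l : Fin n) :
    ∫ ω, ‖ustat H s ω‖ ^ p ∂(Measure.pi fun _ : Fin n => P) ≤
      (∫ ω, ‖ustat H (Function.update s l (2 * s l)) ω‖ ^ p ∂(Measure.pi fun _ : Fin n => P) +
       ∫ ω, ‖ustat H (Function.update s l (-2 * s l)) ω‖ ^ p ∂(Measure.pi fun _ : Fin n => P))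
       / 2 := by
  have hi := fun s => ustat_int P H hH κ hκ (n := n) s p
  have hm := fun s => ((ustat_sm H hH (n := n) s).norm.pow p)
  rw [← integral_add (hi _) (hi _), ← integral_div]
  have hg0 : ∀ ω, 0 ≤ (‖ustat H (Function.update s l (2 * s l)) ω‖ ^ p +
    ‖ustat H (Function.update s l (-2 * s l)) ω‖ ^ p) / 2 := fun ω => by positivity
  rw [← ENNReal.ofReal_le_ofReal_iff (integral_nonneg hg0),
    ofReal_integral_eq_lintegral_ofReal (hi s) (.of_forall fun ω => by positivity),
    ofReal_integral_eq_lintegral_ofReal (((hi _).fun_add (hi _)).div_const 2) (.of_forall hg0)]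
  refine lintegral_le_of_lmarginal_le {l} (hm s).measurable.ennreal_ofReal
    (((hm _).measurable.add (hm _).measurable).div_const 2).ennreal_ofReal ?_
  rw [lmarginal_singleton, lmarginal_singleton]
  intro ω
  dsimp only
  have hup : Measurable (fun y => Function.update ω l y) := measurable_update ω
  set u := ∑ i ∈ injTuples k n, if (∃ j, i j = l) then 0 else (∏ j, s (i j)) • H (ω ∘ i) with hu
  set v : S → B := fun y => ∑ i ∈ injTuples k n, if (∃ j, i j = l) then
        (∏ j, s (i j)) • H (Function.update ω l y ∘ i) else 0 with hv
  have hs1 : s = Function.update s l (1 * s l) := by simp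
  have e1 : ∀ y, ustat H s (Function.update ω l y) = u + v y := by
    intro y
    conv_lhs => rw [hs1]
    rw [ustat_split, one_smul]
  have e2 : ∀ r y, ustat H (Function.update s l (r * s l)) (Function.update ω l y) =
    u + r • v y := fun r y => ustat_split H s l ω r y
  have hvm : StronglyMeasurable v := by
    refine Finset.stronglyMeasurable_fun_sum _ fun i _ => ?_
    split_ifs
    · exact ((comp_sm H hH i).comp_measurable hup).const_smul _
    · exact stronglyMeasurable_const
  have hHi : ∀ i : Fin k → Fin n, Integrable (fun y => H (Function.update ω l y ∘ i)) P := fun i =>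
    Integrable.of_bound ((comp_sm H hH i).comp_measurable hup).aestronglyMeasurable κ
      (.of_forall fun y => hκ _)
  have hv0 : ∫ y, v y ∂P = 0 := by
    rw [hv, integral_finsetSum]
    · refine Finset.sum_eq_zero fun i hi => ?_
      have hinj : Function.Injective i := (mem_filter.1 hi).2
      split_ifs with h
      · obtain ⟨j, rfl⟩ := h
        rw [integral_smul]
        have : ∀ y, Function.update ω (i j) y ∘ i = Function.update (ω ∘ i) j y := fun y =>
          Function.update_comp_eq_of_injective _ hinj j y
        simp only [this, hcan, smul_zero]
      · simp
    · intro i _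
      split_ifs
      · exact (hHi i).smul _
      · exact integrable_zero _ _ _
  obtain ⟨M, hM⟩ : ∃ M, ∀ y, ‖v y‖ ≤ M := by
    refine ⟨∑ i ∈ injTuples k n, ‖∏ j, s (i j)‖ * |κ|, fun y => ?_⟩
    refine (norm_sum_le _ _).trans (Finset.sum_le_sum fun i _ => ?_)
    split_ifs
    · rw [norm_smul]
      gcongr
      exact (hκ _).trans (le_abs_self _)
    · rw [norm_zero]; positivity
  have hint : ∀ r : ℝ, Integrable (fun y => ‖u + r • v y‖ ^ p) P := by
    intro r
    refine Integrable.of_bound (C := (‖u‖ + |r| * M) ^ p) ?_ (.of_forall fun y => ?_)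
    · exact ((stronglyMeasurable_const.add (hvm.const_smul r)).norm.pow p).aestronglyMeasurable
    · rw [norm_pow, norm_norm]
      gcongr
      refine (norm_add_le _ _).trans ?_
      rw [norm_smul, Real.norm_eq_abs]
      gcongr
      exact hM y
  simp only [e1, e2]
  rw [← ofReal_integral_eq_lintegral_ofReal (by simpa using hint 1)
      (.of_forall fun ω => by positivity),
    ← ofReal_integral_eq_lintegral_ofReal (((hint 2).fun_add (hint (-2))).div_const 2)
      (.of_forall fun ω => by positivity)]
  exact ENNReal.ofReal_le_ofReal (one_var P u v hvm M hM hv0 p)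

lemma ustat_moment (C : ℝ) (hC : 0 < C) (hB : IsType2 B C) (hk : 1 ≤ k)
    (hH : StronglyMeasurable H) (κ : ℝ) (hκ0 : 0 ≤ κ) (hκ : ∀ x, ‖H x‖ ≤ κ)
    (hcan : ∀ (j : Fin k) (x : Fin k → S), (∫ y, H (Function.update x j y) ∂P) = 0)
    (q : ℕ) (hq : 1 ≤ q) :
    ∫ ω, ‖∑ i ∈ injTuples k n, H (ω ∘ i)‖ ^ (2 * q) ∂(Measure.pi fun _ : Fin n => P) ≤
      ((2 : ℝ) ^ k) ^ (2 * q) * (((k : ℝ) ^ k) ^ (2 * q) *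
      (((Real.exp (2 * Real.sqrt C + 1) * (2 * q) * n) ^ k) ^ q * κ ^ (2 * q))) := by
  have h1 := sign_induction (fun s : Fin n → ℝ => ∫ ω, ‖ustat H s ω‖ ^ (2 * q)
    ∂(Measure.pi fun _ : Fin n => P)) (ustat_step P H hH κ hκ hcan (2 * q))
  have h2 : ∀ ω : Fin n → S, ustat H (fun _ => 1) ω = ∑ i ∈ injTuples k n, H (ω ∘ i) := by
    intro ω; simp [ustat]
  simp only [h2] at h1
  refine h1.trans ?_
  have h3 : 𝔼 e : Fin n → Bool, ∫ ω, ‖ustat H (fun l => 2 * sgn (e l)) ω‖ ^ (2 * q)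
      ∂(Measure.pi fun _ : Fin n => P) = ∫ ω, 𝔼 e : Fin n → Bool,
        ‖ustat H (fun l => 2 * sgn (e l)) ω‖ ^ (2 * q) ∂(Measure.pi fun _ : Fin n => P) := by
    simp only [Fintype.expect_eq_sum_div_card]
    rw [integral_div, integral_finsetSum]
    intro e _
    exact ustat_int P H hH κ hκ _ _
  rw [h3]
  have h4 : ∀ ω : Fin n → S, 𝔼 e : Fin n → Bool,
        ‖ustat H (fun l => 2 * sgn (e l)) ω‖ ^ (2 * q) ≤ ((2 : ℝ) ^ k) ^ (2 * q) *
        (((k : ℝ) ^ k) ^ (2 * q) *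
      (((Real.exp (2 * Real.sqrt C + 1) * (2 * q) * n) ^ k) ^ q * κ ^ (2 * q))) := by
    intro ω
    have := chaos_moment C hC hB n q hq κ hκ0 k hk (fun i => H (ω ∘ i)) (fun i => hκ _)
    refine le_trans (le_of_eq ?_) (mul_le_mul_of_nonneg_left this
      (by positivity : (0 : ℝ) ≤ ((2 : ℝ) ^ k) ^ (2 * q)))
    rw [Finset.mul_expect]
    refine Finset.expect_congr rfl fun e _ => ?_
    rw [← mul_pow]
    congr 1
    have : ustat H (fun l => 2 * sgn (e l)) ω = (2 : ℝ) ^ k •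
        ∑ i ∈ injTuples k n, (∏ j, sgn (e (i j))) • H (ω ∘ i) := by
      rw [ustat, Finset.smul_sum]
      refine Finset.sum_congr rfl fun i _ => ?_
      rw [smul_smul, Finset.prod_mul_distrib]
      simp
    rw [this, norm_smul, Real.norm_of_nonneg (by positivity)]
  refine (integral_mono_of_nonneg (.of_forall fun ω => ?_) (integrable_const _)
    (.of_forall h4)).trans ?_
  · exact Finset.expect_nonneg fun e _ => by positivity
  · simp

end

/-- (Theorem 9.) Let `B` be a separable Banach space of type 2 with constant `C`
and let `H : S^k → B` be bounded, symmetric and `P`-canonical with `‖H‖ ≤ κ`. Then there are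
constants `λ₀, D` depending only on `k` and `C` such that for all `n ≥ k` and `x ≥ 0`,
`Pr{ ‖Σ_{i ∈ I_n^k} H(X_{i_1},…,X_{i_k})‖ ≥ x } ≤ D exp(−(x/(λ₀ n^{k/2} κ))^{2/k})`. -/
theorem stmt1 (k : ℕ) (hk : 1 ≤ k) (C : ℝ) (hC : 0 < C) :
    ∃ lam0 D : ℝ, 0 < lam0 ∧ 0 < D ∧
      ∀ (B : Type) [NormedAddCommGroup B] [NormedSpace ℝ B] [CompleteSpace B]
        [SecondCountableTopology B],
      -- `B` has type 2 with constant `C`: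
      (∀ (N : ℕ) (x : Fin N → B),
        ((2 : ℝ) ^ N)⁻¹ *
            ∑ ε : Fin N → Bool, ‖∑ i, (if ε i then x i else -x i)‖ ^ 2 ≤
          C * ∑ i, ‖x i‖ ^ 2) →
      ∀ (S : Type) (_ : MeasurableSpace S) (P : Measure S), IsProbabilityMeasure P →
      ∀ H : (Fin k → S) → B, StronglyMeasurable H →
        -- symmetric in its entries:
        (∀ (τ : Equiv.Perm (Fin k)) (x : Fin k → S), H (x ∘ τ) = H x) →
        -- `P`-canonical (completely degenerate):
        (∀ (j : Fin k) (x : Fin k → S), (∫ y, H (Function.update x j y) ∂P) = 0) →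
      ∀ κ : ℝ, (∀ x, ‖H x‖ ≤ κ) →
      ∀ n : ℕ, k ≤ n → ∀ x : ℝ, 0 ≤ x →
        (Measure.pi fun _ : Fin n => P)
          {ω : Fin n → S | x ≤ ‖∑ i ∈ injTuples k n, H (ω ∘ i)‖} ≤
        ENNReal.ofReal (D * Real.exp
          (-(x / (lam0 * (n : ℝ) ^ ((k : ℝ) / 2) * κ)) ^ (2 / (k : ℝ)))) := by
  set K := Real.exp (2 * Real.sqrt C + 1) with hK
  have hK0 : 0 < K := Real.exp_pos _
  have hk0 : (0 : ℝ) < k := by exact_mod_cast hk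
  set A : ℝ := 4 ^ k * (k : ℝ) ^ (2 * k) * (2 * K) ^ k with hA
  have hA0 : 0 < A := by positivity
  have hlam : 0 < Real.sqrt (Real.exp 1 * A) := by positivity
  refine ⟨Real.sqrt (Real.exp 1 * A), Real.exp 1, hlam, Real.exp_pos _, ?_⟩
  intro B _ _ _ _ hB S _ P hP H hH _ hcan κ hκ n hn x hx
  set lam0 := Real.sqrt (Real.exp 1 * A) with hlam0
  have hl2 : lam0 ^ 2 = Real.exp 1 * A := Real.sq_sqrt (by positivity)
  obtain ⟨s0⟩ : Nonempty S := nonempty_of_isProbabilityMeasure P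
  have hκ0 : 0 ≤ κ := (norm_nonneg _).trans (hκ fun _ => s0)
  have hn0 : (0 : ℝ) < n := by exact_mod_cast (lt_of_lt_of_le hk hn)
  set μ := Measure.pi fun _ : Fin n => P with hμ
  set y := x / (lam0 * (n : ℝ) ^ ((k : ℝ) / 2) * κ) with hy
  have hy0 : 0 ≤ y := by positivity
  set z := y ^ (2 / (k : ℝ)) with hz
  have hz0 : 0 ≤ z := by positivity
  rcases lt_or_ge z 1 with hz1 | hz1
  · refine prob_le_one.trans ?_
    rw [← Real.exp_add, ENNReal.one_le_ofReal]
    exact Real.one_le_exp (by linarith)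
  have hypos : 0 < y := by
    rcases hy0.eq_or_lt with h | h
    · rw [hz, ← h, Real.zero_rpow (by positivity)] at hz1
      linarith
    · exact h
  have hκpos : 0 < κ := by
    rcases hκ0.eq_or_lt with h | h
    · rw [hy, ← h] at hypos; simp at hypos
    · exact h
  have hzk : z ^ k = y ^ 2 := by
    rw [hz, ← Real.rpow_natCast, ← Real.rpow_mul hy0, div_mul_cancel₀ _ hk0.ne']
    exact_mod_cast Real.rpow_natCast y 2
  have hnk : ((n : ℝ) ^ ((k : ℝ) / 2)) ^ 2 = (n : ℝ) ^ k := by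
    rw [← Real.rpow_natCast, ← Real.rpow_mul hn0.le]
    push_cast
    rw [div_mul_cancel₀ _ (by norm_num), Real.rpow_natCast]
  have hxy : x = y * (lam0 * (n : ℝ) ^ ((k : ℝ) / 2) * κ) := by
    rw [hy]; field_simp
  have hx2 : x ^ 2 = z ^ k * (Real.exp 1 * A) * (n : ℝ) ^ k * κ ^ 2 := by
    rw [hxy, mul_pow, mul_pow, mul_pow, hnk, hl2, hzk]; ring
  have hxpos : 0 < x := by rw [hxy]; positivity
  set q := ⌊z⌋₊ with hq
  have hq1 : 1 ≤ q := Nat.one_le_floor_iff _ |>.2 hz1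
  have hqz : (q : ℝ) ≤ z := Nat.floor_le hz0
  have hqz' : z ≤ q + 1 := (Nat.lt_floor_add_one z).le
  have hmom := ustat_moment P H (n := n) C hC hB hk hH κ hκ0 hκ hcan q hq1
  have hbd : ((2 : ℝ) ^ k) ^ (2 * q) * (((k : ℝ) ^ k) ^ (2 * q) *
      (((K * (2 * q) * n) ^ k) ^ q * κ ^ (2 * q))) ≤ Real.exp (-q) * x ^ (2 * q) := by
    have e1 : ((2 : ℝ) ^ k) ^ (2 * q) * (((k : ℝ) ^ k) ^ (2 * q) *
      (((K * (2 * q) * n) ^ k) ^ q * κ ^ (2 * q))) = (A * (q : ℝ) ^ k * (n : ℝ) ^ k * κ ^ 2) ^ q := by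
      simp only [pow_mul _ 2 q, ← mul_pow _ _ q]
      congr 1
      rw [hA, show (4 : ℝ) = 2 ^ 2 by norm_num, ← pow_mul, ← pow_mul, ← pow_mul]
      ring
    have e2 : Real.exp (-q) = Real.exp (-1) ^ q := by
      rw [← Real.exp_nat_mul]; congr 1; ring
    rw [e1, e2, pow_mul, ← mul_pow, hx2]
    have e3 : Real.exp (-1) * (z ^ k * (Real.exp 1 * A) * (n : ℝ) ^ k * κ ^ 2) =
        A * z ^ k * (n : ℝ) ^ k * κ ^ 2 := by
      have : Real.exp (-1) * Real.exp 1 = 1 := by rw [← Real.exp_add]; simp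
      linear_combination (z ^ k * A * (n : ℝ) ^ k * κ ^ 2) * this
    rw [e3]
    gcongr
  have hint : Integrable (fun ω : Fin n → S =>
      ‖∑ i ∈ injTuples k n, H (ω ∘ i)‖ ^ (2 * q)) μ := by
    simpa [ustat] using ustat_int P H hH κ hκ (n := n) (fun _ => 1) (2 * q)
  have hmk := mul_meas_ge_le_integral_of_nonneg (μ := μ)
    (.of_forall fun ω : Fin n → S => by positivity) hint (x ^ (2 * q))
  have hset : {ω : Fin n → S | x ≤ ‖∑ i ∈ injTuples k n, H (ω ∘ i)‖} ⊆
      {ω | x ^ (2 * q) ≤ ‖∑ i ∈ injTuples k n, H (ω ∘ i)‖ ^ (2 * q)} :=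
    fun ω hω => pow_le_pow_left₀ hx hω _
  refine (measure_mono hset).trans ?_
  rw [← ofReal_measureReal]
  refine ENNReal.ofReal_le_ofReal ?_
  have hxq : 0 < x ^ (2 * q) := by positivity
  have hfin : μ.real {ω | x ^ (2 * q) ≤ ‖∑ i ∈ injTuples k n, H (ω ∘ i)‖ ^ (2 * q)} ≤
      Real.exp (-q) := by
    have := (hmk.trans hmom).trans hbd
    rw [mul_comm] at this
    exact le_of_mul_le_mul_right this hxq
  refine hfin.trans ?_
  rw [← Real.exp_add]
  exact Real.exp_le_exp.2 (by linarith)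
end
end

section
/- Let B be a separable Banach space, (S, 𝒮) a measurable space, P a probability measure on S, and let H : S^k → B be a bounded, strongly measurable function, symmetric in its entries and P-canonical (i.e. ∫_S H(x_1, …, x_{k−1}, y) dP(y) = 0 for all x_1, …, x_{k−1} ∈ S). Let X_i^{(j)}, 1 ≤ i ≤ n, 1 ≤ j ≤ k, be i.i.d. S-valued random variables with law P. Let κ and χ_n be any numbers with κ ≥ sup_{x_1,…,x_k ∈ S} ‖H(x_1, …, x_k)‖ and χ_n ≥ (E‖ Σ_{(i_1,…,i_k) ∈ I_n^k} H(X_{i_1}^{(1)}, …, X_{i_k}^{(k)}) ‖²)^{1/2}. Then there exists a constant C depending only on k such that for all n ∈ ℕ and all r ≥ 2, E ‖ Σ_{(i_1,…,i_k) ∈ I_n^k} H(X_{i_1}^{(1)}, …, X_{i_k}^{(k)}) ‖^r ≤ C^r [ r^{kr/2} χ_n^r + r^{(k+1)r/2} n^{(k−1)r} κ^r + r^{kr} κ^r ]. -/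
open MeasureTheory Finset
open scoped ENNReal
noncomputable section

lemma cs_aux {W : Type*} [MeasurableSpace W] (ν : Measure W) (f g : W → ℝ) (a b : ℝ)
    (ha : 0 < a) (hb : 0 < b) (hf : Integrable (fun w => f w ^ 2) ν)
    (hg : Integrable (fun w => g w ^ 2) ν) (hfg : Integrable (fun w => f w * g w) ν)
    (hfa : ∫ w, f w ^ 2 ∂ν = a ^ 2) (hgb : ∫ w, g w ^ 2 ∂ν = b ^ 2) :
    ∫ w, f w * g w ∂ν ≤ a * b := by
  have h : 0 ≤ ∫ w, (b * f w - a * g w) ^ 2 ∂ν := integral_nonneg fun w => sq_nonneg _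
  have e : ∫ w, (b * f w - a * g w) ^ 2 ∂ν
      = b ^ 2 * ∫ w, f w ^ 2 ∂ν + a ^ 2 * (∫ w, g w ^ 2 ∂ν) - 2 * a * b * ∫ w, f w * g w ∂ν := by
    rw [← integral_const_mul, ← integral_const_mul, ← integral_const_mul, ← integral_add,
      ← integral_sub]
    · congr 1; ext w; ring
    · exact (hf.const_mul _).add (hg.const_mul _)
    · exact hfg.const_mul _
    · exact hf.const_mul _
    · exact hg.const_mul _
  rw [e, hfa, hgb] at h
  have hab : 0 < a * b := mul_pos ha hb
  by_contra hc
  push Not at hc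
  nlinarith

lemma scalar_step {S : Type*} [MeasurableSpace S] (P : Measure S) [IsProbabilityMeasure P]
    (u v : S → ℝ) (a r t M : ℝ) (hu : Measurable u) (hv : Measurable v)
    (hvM : ∀ s, |v s| ≤ M) (ha : 0 < a) (hr : 2 ≤ r) (ht0 : 0 ≤ t) (ht : t ^ 2 = 2 * r)
    (hua : ∀ s, |u s - a| ≤ a / r) (hau : a ≤ ∫ s, u s ∂P)
    (huv : ∀ s, a + t * (u s - a) ≤ v s) :
    ∫ s, u s ^ r ∂P ≤ (∫ s, v s ^ 2 ∂P) ^ (r / 2) := by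
  have hr0 : 0 < r := by linarith
  have htr : t ≤ r := by nlinarith
  have ht1 : 1 ≤ t := by nlinarith
  set D : S → ℝ := fun s => (u s - a) / a with hD
  have hDm : Measurable D := by fun_prop
  have hDr : ∀ s, |r * D s| ≤ 1 := by
    intro s
    simp only [hD, abs_mul, abs_div, abs_of_pos hr0, abs_of_pos ha]
    have := hua s
    rw [le_div_iff₀ hr0] at this
    rw [← mul_div_assoc, div_le_one ha]; linarith
  have hD1 : ∀ s, |D s| ≤ 1 / r := by
    intro s
    have := hDr s
    rw [abs_mul, abs_of_pos hr0] at this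
    rw [le_div_iff₀ hr0]; linarith
  have hr1 : 1 / r ≤ 1 := by rw [div_le_one hr0]; linarith
  have hus : ∀ s, u s = a * (1 + D s) := by
    intro s; simp only [hD]; field_simp; ring
  have hDi : Integrable D P := Integrable.of_bound hDm.aestronglyMeasurable (1 / r)
    (Filter.Eventually.of_forall fun s => by simpa using hD1 s)
  have hD2i : Integrable (fun s => D s ^ 2) P :=
    Integrable.of_bound (hDm.pow_const 2).aestronglyMeasurable 1
    (Filter.Eventually.of_forall fun s => by
      have := hD1 s
      rw [Real.norm_eq_abs, abs_pow]
      exact pow_le_one₀ (abs_nonneg _) (this.trans hr1))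
  have hv2i : Integrable (fun s => v s ^ 2) P :=
    Integrable.of_bound (hv.pow_const 2).aestronglyMeasurable (M ^ 2)
    (Filter.Eventually.of_forall fun s => by
      rw [Real.norm_eq_abs, abs_pow]
      exact pow_le_pow_left₀ (abs_nonneg _) (hvM s) 2)
  set d1 := ∫ s, D s ∂P with hd1
  set d2 := ∫ s, D s ^ 2 ∂P with hd2
  have hd2n : 0 ≤ d2 := integral_nonneg fun s => sq_nonneg _
  have hui : ∫ s, u s ∂P = a * (1 + d1) := by
    simp_rw [hus]
    rw [integral_const_mul, integral_add (integrable_const _) hDi]; simp [hd1]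
  have hd1n : 0 ≤ d1 := by
    rw [hui] at hau
    by_contra hc
    push Not at hc
    nlinarith
  -- upper bound
  have hub : ∀ s, u s ^ r ≤ a ^ r * (1 + r * D s + r ^ 2 * D s ^ 2) := by
    intro s
    have h0 : 0 ≤ 1 + D s := by
      have := (abs_le.1 (hD1 s)).1; linarith
    rw [hus s, Real.mul_rpow ha.le h0]
    apply mul_le_mul_of_nonneg_left _ (by positivity)
    have h1 : 1 + D s ≤ Real.exp (D s) := by
      have := Real.add_one_le_exp (D s); linarith
    have h2 : (1 + D s) ^ r ≤ Real.exp (r * D s) := by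
      calc (1 + D s) ^ r ≤ (Real.exp (D s)) ^ r := Real.rpow_le_rpow h0 h1 hr0.le
        _ = Real.exp (r * D s) := by rw [← Real.exp_mul]; ring_nf
    have h3 := Real.abs_exp_sub_one_sub_id_le (hDr s)
    have h4 := (abs_le.1 h3).2
    nlinarith
  have hur : ∫ s, u s ^ r ∂P ≤ a ^ r * (1 + r * d1 + r ^ 2 * d2) := by
    have i1 : Integrable (fun s => 1 + r * D s) P := (integrable_const _).add (hDi.const_mul _)
    have i2 : Integrable (fun s => r ^ 2 * D s ^ 2) P := hD2i.const_mul _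
    calc ∫ s, u s ^ r ∂P ≤ ∫ s, a ^ r * (1 + r * D s + r ^ 2 * D s ^ 2) ∂P := by
          apply integral_mono_of_nonneg
          · refine Filter.Eventually.of_forall fun s => ?_
            apply Real.rpow_nonneg
            rw [hus s]
            have := (abs_le.1 (hD1 s)).1
            exact mul_nonneg ha.le (by linarith)
          · exact (i1.add i2).const_mul _
          · exact Filter.Eventually.of_forall hub
      _ = _ := by
          rw [integral_const_mul, integral_add i1 i2, integral_add (integrable_const _)
            (hDi.const_mul _), integral_const_mul, integral_const_mul]
          simp [hd1, hd2]
  have hlb : a ^ 2 * (1 + (2 * t * d1 + t ^ 2 * d2)) ≤ ∫ s, v s ^ 2 ∂P := by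
    have i1 : Integrable (fun s => 1 + 2 * t * D s) P := (integrable_const _).add (hDi.const_mul _)
    have i2 : Integrable (fun s => t ^ 2 * D s ^ 2) P := hD2i.const_mul _
    calc a ^ 2 * (1 + (2 * t * d1 + t ^ 2 * d2))
        = ∫ s, a ^ 2 * (1 + 2 * t * D s + t ^ 2 * D s ^ 2) ∂P := by
          rw [integral_const_mul, integral_add i1 i2, integral_add (integrable_const _)
            (hDi.const_mul _), integral_const_mul, integral_const_mul]
          simp [hd1, hd2]
          left; ring
      _ ≤ _ := by
          apply integral_mono ((i1.add i2).const_mul _) hv2i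
          intro s
          have h1 : a * (1 + t * D s) ≤ v s := by
            have := huv s
            rw [hus s] at this; linarith
          have h2 : 0 ≤ 1 + t * D s := by
            have h := (abs_le.1 (hD1 s)).1
            have h' : t * (1 / r) ≤ 1 := by
              rw [mul_one_div, div_le_one hr0]; exact htr
            nlinarith
          have h3 : 0 ≤ a * (1 + t * D s) := mul_nonneg ha.le h2
          have h4 := pow_le_pow_left₀ h3 h1 2
          simp only [Pi.add_apply]
          calc _ = (a * (1 + t * D s)) ^ 2 := by ring
            _ ≤ _ := h4
  have hx : 0 ≤ 2 * t * d1 + t ^ 2 * d2 := by positivity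
  calc ∫ s, u s ^ r ∂P ≤ a ^ r * (1 + r * d1 + r ^ 2 * d2) := hur
    _ ≤ a ^ r * (1 + (r / 2) * (2 * t * d1 + t ^ 2 * d2)) := by
        apply mul_le_mul_of_nonneg_left _ (by positivity)
        rw [ht]
        nlinarith [mul_nonneg (mul_nonneg hr0.le hd1n) (sub_nonneg.2 ht1)]
    _ ≤ a ^ r * (1 + (2 * t * d1 + t ^ 2 * d2)) ^ (r / 2) := by
        apply mul_le_mul_of_nonneg_left _ (by positivity)
        exact one_add_mul_self_le_rpow_one_add (by linarith) (by linarith)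
    _ = (a ^ 2 * (1 + (2 * t * d1 + t ^ 2 * d2))) ^ (r / 2) := by
        rw [Real.mul_rpow (by positivity) (by positivity)]
        congr 1
        rw [← Real.rpow_natCast, ← Real.rpow_mul ha.le]
        congr 1; push_cast; ring
    _ ≤ _ := Real.rpow_le_rpow (by positivity) hlb (by linarith)

lemma vec_step {S W B : Type} [MeasurableSpace S] [MeasurableSpace W]
    [NormedAddCommGroup B] [NormedSpace ℝ B] [CompleteSpace B]
    (P : Measure S) [IsProbabilityMeasure P] (ν : Measure W) [IsProbabilityMeasure ν]
    (A : W → B) (Y : S → W → B) (hA : StronglyMeasurable A)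
    (hY : StronglyMeasurable (fun p : S × W => Y p.1 p.2)) (κ M K r t : ℝ)
    (hAM : ∀ w, ‖A w‖ ≤ M) (hYκ : ∀ s w, ‖Y s w‖ ≤ κ) (hc : ∀ w, ∫ s, Y s w ∂P = 0)
    (hκ : 0 ≤ κ) (hM : 0 ≤ M)
    (hK : 0 < K) (hrK : r * κ ≤ K) (hr : 2 ≤ r) (ht0 : 0 ≤ t) (ht : t ^ 2 = 2 * r) :
    ∫⁻ s, (∫⁻ w, ENNReal.ofReal ((‖A w + Y s w‖ + K) ^ 2) ∂ν) ^ (r / 2) ∂P ≤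
      (∫⁻ s, ∫⁻ w, ENNReal.ofReal ((‖A w + t • Y s w‖ + K) ^ 2) ∂ν ∂P) ^ (r / 2) := by
  have hr0 : 0 < r := by linarith
  have ht1 : 1 ≤ t := by nlinarith
  have htp : 0 < t := by linarith
  have hκt : κ ≤ t * κ := by nlinarith
  set L := M + t * κ + K with hL
  set f0 : W → ℝ := fun w => ‖A w‖ + K with hf0
  set f1 : S → W → ℝ := fun s w => ‖A w + Y s w‖ + K with hf1
  set f2 : S → W → ℝ := fun s w => ‖A w + t • Y s w‖ + K with hf2
  have hA' : StronglyMeasurable (fun p : S × W => A p.2) := hA.comp_measurable measurable_snd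
  have m0 : Measurable f0 := hA.norm.measurable.add_const K
  have m1 : Measurable (fun p : S × W => f1 p.1 p.2) :=
    (hA'.add hY).norm.measurable.add_const K
  have m2 : Measurable (fun p : S × W => f2 p.1 p.2) :=
    (hA'.add (hY.const_smul t)).norm.measurable.add_const K
  have m1w : ∀ s, Measurable (f1 s) := fun s => m1.comp (measurable_prodMk_left (x := s))
  have m2w : ∀ s, Measurable (f2 s) := fun s => m2.comp (measurable_prodMk_left (x := s))
  have m1s : ∀ w, Measurable (fun s => f1 s w) := fun w =>
    m1.comp (measurable_prodMk_right (y := w))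
  have tY : ∀ s w, ‖t • Y s w‖ ≤ t * κ := fun s w => by
    rw [norm_smul, Real.norm_of_nonneg ht0]
    exact mul_le_mul_of_nonneg_left (hYκ s w) ht0
  have k0 : ∀ w, K ≤ f0 w := fun w => by simp [hf0]
  have k1 : ∀ s w, K ≤ f1 s w := fun s w => by simp [hf1]
  have k2 : ∀ s w, K ≤ f2 s w := fun s w => by simp [hf2]
  have l0 : ∀ w, |f0 w| ≤ L := fun w => by
    rw [abs_of_pos (hK.trans_le (k0 w))]
    have := hAM w
    simp only [hf0, hL]; linarith
  have l1 : ∀ s w, |f1 s w| ≤ L := fun s w => by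
    rw [abs_of_pos (hK.trans_le (k1 s w))]
    have := hAM w
    have := hYκ s w
    have := norm_add_le (A w) (Y s w)
    simp only [hf1, hL]; linarith
  have l2 : ∀ s w, |f2 s w| ≤ L := fun s w => by
    rw [abs_of_pos (hK.trans_le (k2 s w))]
    have := hAM w
    have := tY s w
    have := norm_add_le (A w) (t • Y s w)
    simp only [hf2, hL]; linarith
  have intmul : ∀ {Z : Type} [MeasurableSpace Z] (η : Measure Z) [IsProbabilityMeasure η]
      (f g : Z → ℝ), Measurable f → Measurable g → (∀ z, |f z| ≤ L) → (∀ z, |g z| ≤ L) →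
      Integrable (fun z => f z * g z) η := by
    intro Z _ η _ f g hf hg hfL hgL
    refine Integrable.of_bound (hf.mul hg).aestronglyMeasurable (L * L)
      (Filter.Eventually.of_forall fun z => ?_)
    rw [Real.norm_eq_abs, abs_mul]
    exact mul_le_mul (hfL z) (hgL z) (abs_nonneg _) ((abs_nonneg _).trans (hfL z))
  have intsq : ∀ {Z : Type} [MeasurableSpace Z] (η : Measure Z) [IsProbabilityMeasure η]
      (f : Z → ℝ), Measurable f → (∀ z, |f z| ≤ L) →
      Integrable (fun z => f z ^ 2) η := by
    intro Z _ η _ f hf hfL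
    simp_rw [pow_two]
    exact intmul η f f hf hf hfL hfL
  have int1 : ∀ {Z : Type} [MeasurableSpace Z] (η : Measure Z) [IsProbabilityMeasure η]
      (f : Z → ℝ), Measurable f → (∀ z, |f z| ≤ L) → Integrable f η := by
    intro Z _ η _ f hf hfL
    exact Integrable.of_bound hf.aestronglyMeasurable L (Filter.Eventually.of_forall hfL)
  have lowsq : ∀ (f : W → ℝ), Measurable f → (∀ w, |f w| ≤ L) → (∀ w, K ≤ f w) →
      K ^ 2 ≤ ∫ w, f w ^ 2 ∂ν := by
    intro f hf hfL hfK
    calc K ^ 2 = ∫ w, K ^ 2 ∂ν := by simp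
      _ ≤ _ := integral_mono (integrable_const _) (intsq ν f hf hfL)
          fun w => pow_le_pow_left₀ hK.le (hfK w) 2
  set a : ℝ := Real.sqrt (∫ w, f0 w ^ 2 ∂ν) with ha
  set u : S → ℝ := fun s => Real.sqrt (∫ w, f1 s w ^ 2 ∂ν) with hu
  set v : S → ℝ := fun s => Real.sqrt (∫ w, f2 s w ^ 2 ∂ν) with hv
  have sq0 : ∫ w, f0 w ^ 2 ∂ν = a ^ 2 :=
    (Real.sq_sqrt (integral_nonneg fun w => sq_nonneg _)).symm
  have sq1 : ∀ s, ∫ w, f1 s w ^ 2 ∂ν = u s ^ 2 := fun s =>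
    (Real.sq_sqrt (integral_nonneg fun w => sq_nonneg _)).symm
  have sq2 : ∀ s, ∫ w, f2 s w ^ 2 ∂ν = v s ^ 2 := fun s =>
    (Real.sq_sqrt (integral_nonneg fun w => sq_nonneg _)).symm
  have aK : K ≤ a := Real.le_sqrt_of_sq_le (lowsq f0 m0 l0 k0)
  have uK : ∀ s, K ≤ u s := fun s => Real.le_sqrt_of_sq_le (lowsq _ (m1w s) (l1 s) (k1 s))
  have vK : ∀ s, K ≤ v s := fun s => Real.le_sqrt_of_sq_le (lowsq _ (m2w s) (l2 s) (k2 s))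
  have ha0 : 0 < a := hK.trans_le aK
  have hu0 : ∀ s, 0 < u s := fun s => hK.trans_le (uK s)
  have hv0 : ∀ s, 0 < v s := fun s => hK.trans_le (vK s)
  have mu : Measurable u := by
    have : StronglyMeasurable (fun s => ∫ w, f1 s w ^ 2 ∂ν) :=
      StronglyMeasurable.integral_prod_right (f := fun s w => f1 s w ^ 2)
        (m1.pow_const 2).stronglyMeasurable
    exact this.measurable.sqrt
  have mv : Measurable v := by
    have : StronglyMeasurable (fun s => ∫ w, f2 s w ^ 2 ∂ν) :=
      StronglyMeasurable.integral_prod_right (f := fun s w => f2 s w ^ 2)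
        (m2.pow_const 2).stronglyMeasurable
    exact this.measurable.sqrt
  have hLK : K ≤ L := by simp only [hL]; nlinarith [mul_nonneg ht0 hκ]
  have hL0 : 0 ≤ L := hK.le.trans hLK
  have upsq : ∀ (f : W → ℝ), Measurable f → (∀ w, |f w| ≤ L) →
      Real.sqrt (∫ w, f w ^ 2 ∂ν) ≤ L := by
    intro f hf hfL
    apply Real.sqrt_le_iff.2 ⟨hL0, ?_⟩
    calc ∫ w, f w ^ 2 ∂ν ≤ ∫ w, L ^ 2 ∂ν := integral_mono (intsq ν f hf hfL) (integrable_const _)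
          fun w => sq_le_sq' (abs_le.1 (hfL w)).1 (abs_le.1 (hfL w)).2
      _ = L ^ 2 := by simp
  have uL : ∀ s, |u s| ≤ L := fun s => by
    rw [abs_of_pos (hu0 s)]; exact upsq _ (m1w s) (l1 s)
  have vL : ∀ s, |v s| ≤ L := fun s => by
    rw [abs_of_pos (hv0 s)]; exact upsq _ (m2w s) (l2 s)
  -- Lipschitz
  have lip : ∀ (f g : W → ℝ) (x y : ℝ), Measurable f → Measurable g → (∀ w, |f w| ≤ L) →
      (∀ w, |g w| ≤ L) → 0 < x → 0 < y → (∀ w, 0 ≤ f w) → ∫ w, f w ^ 2 ∂ν = x ^ 2 →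
      ∫ w, g w ^ 2 ∂ν = y ^ 2 → (∀ w, f w ≤ g w + κ) → x ≤ y + κ := by
    intro f g x y mf mg fL gL hx hy hf hfx hgy hfg
    have hg1 : ∫ w, g w * 1 ∂ν ≤ y * 1 :=
      cs_aux ν g (fun _ => 1) y 1 hy one_pos (intsq ν g mg gL) (integrable_const _)
        (by simpa using int1 ν g mg gL) hgy (by simp)
    simp only [mul_one] at hg1
    have : x ^ 2 ≤ (y + κ) ^ 2 := by
      rw [← hfx]
      calc ∫ w, f w ^ 2 ∂ν ≤ ∫ w, (g w ^ 2 + (2 * κ * g w + κ ^ 2)) ∂ν := by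
            apply integral_mono (intsq ν f mf fL)
            · exact (intsq ν g mg gL).add (((int1 ν g mg gL).const_mul _).add (integrable_const _))
            · intro w
              have := pow_le_pow_left₀ (hf w) (hfg w) 2
              simp only
              linarith
        _ = y ^ 2 + (2 * κ * ∫ w, g w ∂ν + κ ^ 2) := by
            have j1 : Integrable (fun w => 2 * κ * g w) ν := (int1 ν g mg gL).const_mul _
            have j2 : Integrable (fun w => 2 * κ * g w + κ ^ 2) ν := j1.add (integrable_const _)
            rw [integral_add (intsq ν g mg gL) j2, integral_add j1
              (integrable_const _), integral_const_mul, hgy]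
            simp
        _ ≤ _ := by nlinarith
    exact (sq_le_sq₀ hx.le (by linarith)).1 this
  have hua : ∀ s, |u s - a| ≤ a / r := by
    intro s
    have e1 : u s ≤ a + κ := lip (f1 s) f0 (u s) a (m1w s) m0 (l1 s) l0 (hu0 s) ha0
      (fun w => hK.le.trans (k1 s w)) (sq1 s) sq0 (fun w => by
        have := norm_add_le (A w) (Y s w)
        have := hYκ s w
        simp only [hf1, hf0]; linarith)
    have e2 : a ≤ u s + κ := lip f0 (f1 s) a (u s) m0 (m1w s) l0 (l1 s) ha0 (hu0 s)
      (fun w => hK.le.trans (k0 w)) sq0 (sq1 s) (fun w => by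
        have := norm_sub_le (A w + Y s w) (Y s w)
        have := hYκ s w
        simp only [add_sub_cancel_right] at *
        simp only [hf1, hf0]; linarith)
    have e3 : κ ≤ a / r := by
      rw [le_div_iff₀ hr0]; linarith
    rw [abs_le]; constructor <;> linarith
  -- Jensen
  have hau : a ≤ ∫ s, u s ∂P := by
    have hj : ∀ w, f0 w ≤ ∫ s, f1 s w ∂P := by
      intro w
      have hYi : Integrable (fun s => Y s w) P :=
        Integrable.of_bound (hY.comp_measurable
          (measurable_prodMk_right (y := w))).aestronglyMeasurable κ
          (Filter.Eventually.of_forall fun s => hYκ s w)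
      have e : A w = ∫ s, (A w + Y s w) ∂P := by
        rw [integral_add (integrable_const _) hYi, hc w]; simp
      have hni : Integrable (fun s => ‖A w + Y s w‖) P := ((integrable_const _).add hYi).norm
      simp only [hf0, hf1]
      rw [integral_add hni (integrable_const _)]
      have := norm_integral_le_integral_norm (μ := P) (fun s => A w + Y s w)
      rw [← e] at this
      simpa using this
    have i12 : Integrable (fun p : S × W => f0 p.2 * f1 p.1 p.2) (P.prod ν) :=
      intmul (P.prod ν) (fun p => f0 p.2) (fun p => f1 p.1 p.2) (m0.comp measurable_snd) m1
        (fun p => l0 p.2) (fun p => l1 p.1 p.2)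
    have h1 : a ^ 2 ≤ a * ∫ s, u s ∂P := by
      rw [← sq0]
      calc ∫ w, f0 w ^ 2 ∂ν ≤ ∫ w, ∫ s, f0 w * f1 s w ∂P ∂ν := by
            apply integral_mono (intsq ν f0 m0 l0) i12.integral_prod_right
            intro w
            simp only
            rw [integral_const_mul, pow_two]
            exact mul_le_mul_of_nonneg_left (hj w) (hK.le.trans (k0 w))
        _ = ∫ s, ∫ w, f0 w * f1 s w ∂ν ∂P :=
            (integral_integral_swap (f := fun s w => f0 w * f1 s w) i12).symm
        _ ≤ ∫ s, a * u s ∂P := by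
            apply integral_mono i12.integral_prod_left ((int1 P u mu uL).const_mul _)
            intro s
            exact cs_aux ν f0 (f1 s) a (u s) ha0 (hu0 s) (intsq ν f0 m0 l0)
              (intsq ν _ (m1w s) (l1 s)) (intmul ν _ _ m0 (m1w s) l0 (l1 s)) sq0 (sq1 s)
        _ = _ := integral_const_mul _ _
    rw [pow_two] at h1
    exact le_of_mul_le_mul_left h1 ha0
  -- convexity
  have huv : ∀ s, a + t * (u s - a) ≤ v s := by
    intro s
    have hp : ∀ w, t * f1 s w ≤ (t - 1) * f0 w + f2 s w := by
      intro w
      have e : t • (A w + Y s w) = (t - 1) • A w + (A w + t • Y s w) := by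
        module
      have := norm_add_le ((t - 1) • A w) (A w + t • Y s w)
      rw [← e, norm_smul, norm_smul, Real.norm_of_nonneg ht0,
        Real.norm_of_nonneg (by linarith : 0 ≤ t - 1)] at this
      simp only [hf0, hf1, hf2]; linarith
    have hcs := cs_aux ν f0 (f2 s) a (v s) ha0 (hv0 s) (intsq ν f0 m0 l0)
      (intsq ν _ (m2w s) (l2 s)) (intmul ν _ _ m0 (m2w s) l0 (l2 s)) sq0 (sq2 s)
    have i0 := intsq ν f0 m0 l0
    have i2 := intsq ν _ (m2w s) (l2 s)
    have i02 := intmul ν _ _ m0 (m2w s) l0 (l2 s)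
    have : (t * u s) ^ 2 ≤ ((t - 1) * a + v s) ^ 2 := by
      calc (t * u s) ^ 2 = ∫ w, t ^ 2 * f1 s w ^ 2 ∂ν := by
            rw [integral_const_mul, sq1]; ring
        _ ≤ ∫ w, ((t - 1) ^ 2 * f0 w ^ 2 + (2 * (t - 1) * (f0 w * f2 s w) + f2 s w ^ 2)) ∂ν := by
            apply integral_mono ((intsq ν _ (m1w s) (l1 s)).const_mul _)
            · exact (i0.const_mul _).add ((i02.const_mul _).add i2)
            · intro w
              have := pow_le_pow_left₀ (mul_nonneg ht0 (hK.le.trans (k1 s w))) (hp w) 2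
              simp only
              linarith
        _ = (t - 1) ^ 2 * a ^ 2 + (2 * (t - 1) * (∫ w, f0 w * f2 s w ∂ν) + v s ^ 2) := by
            have j1 : Integrable (fun w => 2 * (t - 1) * (f0 w * f2 s w)) ν := i02.const_mul _
            have j2 : Integrable (fun w => 2 * (t - 1) * (f0 w * f2 s w) + f2 s w ^ 2) ν :=
              j1.add i2
            rw [integral_add (i0.const_mul _) j2,
              integral_add j1 i2, integral_const_mul, integral_const_mul, sq0, sq2]
        _ ≤ _ := by nlinarith
    have h2 := (sq_le_sq₀ (mul_nonneg ht0 (hu0 s).le)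
      (add_nonneg (mul_nonneg (by linarith) ha0.le) (hv0 s).le)).1 this
    linarith
  have key := scalar_step P u v a r t L mu mv vL ha0 hr ht0 ht hua hau huv
  have E1 : ∀ s, ∫⁻ w, ENNReal.ofReal (f1 s w ^ 2) ∂ν = ENNReal.ofReal (u s ^ 2) := by
    intro s
    rw [← sq1, ofReal_integral_eq_lintegral_ofReal (intsq ν _ (m1w s) (l1 s))]
    exact Filter.Eventually.of_forall fun w => sq_nonneg _
  have E2 : ∀ s, ∫⁻ w, ENNReal.ofReal (f2 s w ^ 2) ∂ν = ENNReal.ofReal (v s ^ 2) := by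
    intro s
    rw [← sq2, ofReal_integral_eq_lintegral_ofReal (intsq ν _ (m2w s) (l2 s))]
    exact Filter.Eventually.of_forall fun w => sq_nonneg _
  have E3 : ∀ s, (u s ^ 2) ^ (r / 2) = u s ^ r := by
    intro s
    rw [← Real.rpow_natCast, ← Real.rpow_mul (hu0 s).le]
    congr 1; push_cast; ring
  change ∫⁻ s, (∫⁻ w, ENNReal.ofReal (f1 s w ^ 2) ∂ν) ^ (r / 2) ∂P ≤
      (∫⁻ s, ∫⁻ w, ENNReal.ofReal (f2 s w ^ 2) ∂ν ∂P) ^ (r / 2)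
  simp_rw [E1, E2]
  rw [← ofReal_integral_eq_lintegral_ofReal (intsq P v mv vL)
    (Filter.Eventually.of_forall fun w => sq_nonneg _),
    ENNReal.ofReal_rpow_of_nonneg (integral_nonneg fun s => sq_nonneg _) (by linarith)]
  have E4 : ∀ s, ENNReal.ofReal (u s ^ 2) ^ (r / 2) = ENNReal.ofReal (u s ^ r) := fun s => by
    rw [ENNReal.ofReal_rpow_of_nonneg (sq_nonneg (u s)) (by linarith : 0 ≤ r / 2), E3]
  simp_rw [E4]
  rw [← ofReal_integral_eq_lintegral_ofReal]
  · exact ENNReal.ofReal_le_ofReal key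
  · refine Integrable.of_bound (mu.pow_const r).aestronglyMeasurable (L ^ r)
      (Filter.Eventually.of_forall fun s => ?_)
    rw [Real.norm_of_nonneg (Real.rpow_nonneg (hu0 s).le r)]
    exact Real.rpow_le_rpow (hu0 s).le ((le_abs_self _).trans (uL s)) hr0.le
  · exact Filter.Eventually.of_forall fun s => Real.rpow_nonneg (hu0 s).le r

/-- The chaos with each variable `ω p` carrying a scalar weight `c p`. -/
def Tsum {k n : ℕ} {S B : Type} [NormedAddCommGroup B] [NormedSpace ℝ B]
    (H : (Fin k → S) → B) (c : Fin k × Fin n → ℝ) (ω : Fin k × Fin n → S) : B :=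
  ∑ i ∈ injTuples k n, (∏ j, c (j, i j)) • H (fun j => ω (j, i j))

/-- Part of the chaos not involving the variable `v`. -/
def Tbase {k n : ℕ} {S B : Type} [NormedAddCommGroup B] [NormedSpace ℝ B]
    (H : (Fin k → S) → B) (v : Fin k × Fin n) (c : Fin k × Fin n → ℝ)
    (ω : Fin k × Fin n → S) : B :=
  ∑ i ∈ injTuples k n with i v.1 ≠ v.2, (∏ j, c (j, i j)) • H (fun j => ω (j, i j))

/-- Coefficient of the weight of the variable `v`. -/
def Tcoef {k n : ℕ} {S B : Type} [NormedAddCommGroup B] [NormedSpace ℝ B]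
    (H : (Fin k → S) → B) (v : Fin k × Fin n) (c : Fin k × Fin n → ℝ)
    (ω : Fin k × Fin n → S) : B :=
  ∑ i ∈ injTuples k n with i v.1 = v.2,
    (∏ j ∈ univ.erase v.1, c (j, i j)) • H (fun j => ω (j, i j))

lemma sm_comp {k n : ℕ} {S B : Type} [NormedAddCommGroup B] [MeasurableSpace S] (H : (Fin k → S) → B) (hH : StronglyMeasurable H)
    (i : Fin k → Fin n) :
    StronglyMeasurable (fun ω : Fin k × Fin n → S => H (fun j => ω (j, i j))) :=
  hH.comp_measurable (by fun_prop)

section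
variable {k n : ℕ} {S B : Type} [NormedAddCommGroup B] [NormedSpace ℝ B]

lemma Tsum_split (H : (Fin k → S) → B) (v : Fin k × Fin n) (c : Fin k × Fin n → ℝ)
    (ω : Fin k × Fin n → S) : Tsum H c ω = Tbase H v c ω + c v • Tcoef H v c ω := by
  unfold Tsum Tbase Tcoef
  rw [← Finset.sum_filter_add_sum_filter_not (injTuples k n) (fun i => i v.1 ≠ v.2)]
  congr 1
  simp only [not_not]
  rw [Finset.smul_sum]
  apply Finset.sum_congr rfl
  intro i hi
  rw [smul_smul]
  congr 1
  rw [← Finset.mul_prod_erase univ _ (Finset.mem_univ v.1), (Finset.mem_filter.1 hi).2]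

lemma Tbase_congr (H : (Fin k → S) → B) (v : Fin k × Fin n) (c c' : Fin k × Fin n → ℝ)
    (ω ω' : Fin k × Fin n → S) (hc : ∀ p, p ≠ v → c p = c' p) (hω : ∀ p, p ≠ v → ω p = ω' p) :
    Tbase H v c ω = Tbase H v c' ω' := by
  unfold Tbase
  apply Finset.sum_congr rfl
  intro i hi
  have hi := (Finset.mem_filter.1 hi).2
  have hne : ∀ j, (j, i j) ≠ v := by
    rintro j rfl; exact hi rfl
  congr 1
  · exact Finset.prod_congr rfl fun j _ => hc _ (hne j)
  · congr 1; ext j; exact hω _ (hne j)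

lemma Tcoef_congr (H : (Fin k → S) → B) (v : Fin k × Fin n) (c c' : Fin k × Fin n → ℝ)
    (ω : Fin k × Fin n → S) (hc : ∀ p, p ≠ v → c p = c' p) :
    Tcoef H v c ω = Tcoef H v c' ω := by
  unfold Tcoef
  apply Finset.sum_congr rfl
  intro i hi
  congr 1
  refine Finset.prod_congr rfl fun j hj => hc _ ?_
  rintro rfl
  simp at hj

lemma card_fix (v : Fin k × Fin n) :
    #{i ∈ injTuples k n | i v.1 = v.2} ≤ n ^ (k - 1) := by
  have : Fintype.card ({j : Fin k // j ≠ v.1} → Fin n) = n ^ (k - 1) := by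
    simp
  rw [← this, ← Finset.card_univ]
  apply Finset.card_le_card_of_injOn (fun i (j : {j : Fin k // j ≠ v.1}) => i j)
  · intro i _; simp
  · intro i hi i' hi' h
    have hi := (Finset.mem_filter.1 hi).2
    have hi' := (Finset.mem_filter.1 hi').2
    ext j
    by_cases hj : j = v.1
    · subst hj; rw [hi, hi']
    · have := congrFun h ⟨j, hj⟩
      simp only at this
      rw [this]

lemma norm_Tcoef_le (H : (Fin k → S) → B) (v : Fin k × Fin n) (c : Fin k × Fin n → ℝ)
    (ω : Fin k × Fin n → S) (κ t : ℝ) (hκ : 0 ≤ κ) (ht : 0 ≤ t) (hc0 : ∀ p, 0 ≤ c p)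
    (hct : ∀ p, c p ≤ t) (hH : ∀ x, ‖H x‖ ≤ κ) :
    ‖Tcoef H v c ω‖ ≤ n ^ (k - 1) * (t ^ (k - 1) * κ) := by
  unfold Tcoef
  have h1 : ∀ i ∈ ({i ∈ injTuples k n | i v.1 = v.2} : Finset _),
      ‖(∏ j ∈ univ.erase v.1, c (j, i j)) • H (fun j => ω (j, i j))‖ ≤ t ^ (k - 1) * κ := by
    intro i _
    rw [norm_smul, Real.norm_of_nonneg (Finset.prod_nonneg fun j _ => hc0 _)]
    refine mul_le_mul ?_ (hH _) (norm_nonneg _) (by positivity)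
    calc ∏ j ∈ univ.erase v.1, c (j, i j) ≤ ∏ j ∈ univ.erase v.1, t :=
          Finset.prod_le_prod (fun j _ => hc0 _) fun j _ => hct _
      _ = t ^ (k - 1) := by simp
  refine (norm_sum_le_of_le _ h1).trans ?_
  rw [Finset.sum_const, nsmul_eq_mul]
  refine mul_le_mul_of_nonneg_right ?_ (by positivity)
  exact_mod_cast card_fix v

lemma norm_Tbase_le (H : (Fin k → S) → B) (v : Fin k × Fin n) (c : Fin k × Fin n → ℝ)
    (ω : Fin k × Fin n → S) (κ t : ℝ) (ht : 0 ≤ t) (hc0 : ∀ p, 0 ≤ c p)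
    (hct : ∀ p, c p ≤ t) (hH : ∀ x, ‖H x‖ ≤ κ) :
    ‖Tbase H v c ω‖ ≤ #{i ∈ injTuples k n | i v.1 ≠ v.2} * (t ^ k * κ) := by
  unfold Tbase
  have h1 : ∀ i ∈ ({i ∈ injTuples k n | i v.1 ≠ v.2} : Finset _),
      ‖(∏ j, c (j, i j)) • H (fun j => ω (j, i j))‖ ≤ t ^ k * κ := by
    intro i _
    rw [norm_smul, Real.norm_of_nonneg (Finset.prod_nonneg fun j _ => hc0 _)]
    refine mul_le_mul ?_ (hH _) (norm_nonneg _) (by positivity)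
    calc ∏ j, c (j, i j) ≤ ∏ j : Fin k, t :=
          Finset.prod_le_prod (fun j _ => hc0 _) fun j _ => hct _
      _ = t ^ k := by simp
  refine (norm_sum_le_of_le _ h1).trans ?_
  rw [Finset.sum_const, nsmul_eq_mul]

lemma sm_Tsum [MeasurableSpace S] (H : (Fin k → S) → B) (hH : StronglyMeasurable H)
    (c : Fin k × Fin n → ℝ) : StronglyMeasurable (Tsum H c) := by
  unfold Tsum
  exact Finset.stronglyMeasurable_fun_sum _ fun i _ => (sm_comp H hH i).const_smul _

lemma sm_Tbase [MeasurableSpace S] (H : (Fin k → S) → B) (hH : StronglyMeasurable H)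
    (v : Fin k × Fin n) (c : Fin k × Fin n → ℝ) : StronglyMeasurable (Tbase H v c) := by
  unfold Tbase
  exact Finset.stronglyMeasurable_fun_sum _ fun i _ => (sm_comp H hH i).const_smul _

lemma sm_Tcoef [MeasurableSpace S] (H : (Fin k → S) → B) (hH : StronglyMeasurable H)
    (v : Fin k × Fin n) (c : Fin k × Fin n → ℝ) : StronglyMeasurable (Tcoef H v c) := by
  unfold Tcoef
  exact Finset.stronglyMeasurable_fun_sum _ fun i _ => (sm_comp H hH i).const_smul _

lemma integral_Tcoef [MeasurableSpace S] (P : Measure S) [IsProbabilityMeasure P]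
    (H : (Fin k → S) → B) (hH : StronglyMeasurable H) (κ : ℝ) (hHκ : ∀ x, ‖H x‖ ≤ κ)
    (hcan : ∀ (j : Fin k) (x : Fin k → S), (∫ y, H (Function.update x j y) ∂P) = 0)
    (v : Fin k × Fin n) (c : Fin k × Fin n → ℝ) (ω : Fin k × Fin n → S) :
    ∫ s, Tcoef H v c (Function.update ω v s) ∂P = 0 := by
  unfold Tcoef
  have e : ∀ i ∈ ({i ∈ injTuples k n | i v.1 = v.2} : Finset _), ∀ s : S,
      H (fun j => Function.update ω v s (j, i j))
        = H (Function.update (fun j => ω (j, i j)) v.1 s) := by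
    intro i hi s
    have hi := (Finset.mem_filter.1 hi).2
    congr 1; ext j
    by_cases hj : j = v.1
    · subst hj
      have : (v.1, i v.1) = v := by rw [hi]
      rw [this]; simp
    · have : (j, i j) ≠ v := by rintro rfl; exact hj rfl
      simp [Function.update_of_ne, this, hj]
  rw [integral_finsetSum]
  · apply Finset.sum_eq_zero
    intro i hi
    rw [integral_smul]
    simp_rw [e i hi]
    rw [hcan, smul_zero]
  · intro i _
    apply Integrable.smul
    refine Integrable.of_bound ?_ κ (Filter.Eventually.of_forall fun s => hHκ _)
    exact (hH.comp_measurable (by fun_prop)).aestronglyMeasurable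

/-- weights: `t` on `A`, `1` elsewhere -/
def wt (t : ℝ) (A : Finset (Fin k × Fin n)) (p : Fin k × Fin n) : ℝ := if p ∈ A then t else 1

/-- integrand -/
def fA (H : (Fin k → S) → B) (K t : ℝ) (A : Finset (Fin k × Fin n)) (ω : Fin k × Fin n → S) :
    ℝ≥0∞ := ENNReal.ofReal ((‖Tsum H (wt t A) ω‖ + K) ^ 2)

lemma measurable_fA [MeasurableSpace S] (H : (Fin k → S) → B) (hH : StronglyMeasurable H)
    (K t : ℝ) (A : Finset (Fin k × Fin n)) : Measurable (fA H K t A) := by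
  unfold fA
  exact (((sm_Tsum H hH _).norm.measurable.add_const K).pow_const 2).ennreal_ofReal

lemma step_A [CompleteSpace B] [MeasurableSpace S] (P : Measure S) [IsProbabilityMeasure P]
    (H : (Fin k → S) → B) (hH : StronglyMeasurable H) (κ : ℝ) (hHκ : ∀ x, ‖H x‖ ≤ κ)
    (hκ : 0 ≤ κ)
    (hcan : ∀ (j : Fin k) (x : Fin k → S), (∫ y, H (Function.update x j y) ∂P) = 0)
    (K r t : ℝ) (hK : 0 < K) (hrK : r * (n ^ (k - 1) * (t ^ (k - 1) * κ)) ≤ K)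
    (hr : 2 ≤ r) (ht0 : 0 ≤ t) (ht : t ^ 2 = 2 * r)
    (A : Finset (Fin k × Fin n)) (v : Fin k × Fin n) (hv : v ∉ A) (x : Fin k × Fin n → S) :
    ∫⁻ s, (lmarginal (fun _ => P) A (fA H K t A) (Function.update x v s)) ^ (r / 2) ∂P ≤
      (lmarginal (fun _ => P) (insert v A) (fA H K t (insert v A)) x) ^ (r / 2) := by
  have ht1 : 1 ≤ t := by nlinarith
  rw [lmarginal_insert _ (measurable_fA H hH K t _) hv]
  unfold lmarginal fA
  have comm : ∀ (s : S) (w : (i : A) → S), Function.updateFinset (Function.update x v s) A w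
      = Function.update (Function.updateFinset x A w) v s := by
    intro s w
    ext p
    simp only [Function.updateFinset_def, Function.update_apply]
    by_cases hp : p = v
    · subst hp; simp [hv]
    · simp [hp]
  have e1 : ∀ (s : S) (w : (i : A) → S),
      Tsum H (wt t A) (Function.updateFinset (Function.update x v s) A w)
      = Tbase H v (wt t A) (Function.updateFinset x A w)
        + Tcoef H v (wt t A) (Function.updateFinset (Function.update x v s) A w) := by
    intro s w
    rw [Tsum_split H v, Tbase_congr H v (wt t A) (wt t A) _ (Function.updateFinset x A w)
      (fun _ _ => rfl)]
    · simp [wt, hv]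
    · intro p hp; rw [comm]; simp [hp]
  have e2 : ∀ (s : S) (w : (i : A) → S),
      Tsum H (wt t (insert v A)) (Function.updateFinset (Function.update x v s) A w)
      = Tbase H v (wt t A) (Function.updateFinset x A w)
        + t • Tcoef H v (wt t A) (Function.updateFinset (Function.update x v s) A w) := by
    intro s w
    have hw : ∀ p, p ≠ v → wt t (insert v A) p = wt t A p := by
      intro p hp; simp [wt, hp]
    rw [Tsum_split H v, Tbase_congr H v _ (wt t A) _ (Function.updateFinset x A w) hw,
      Tcoef_congr H v _ (wt t A) _ hw]
    · simp [wt]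
    · intro p hp; rw [comm]; simp [hp]
  simp_rw [e1, e2]
  have w0 : ∀ p, 0 ≤ wt t A p := by
    intro p; unfold wt; split_ifs <;> linarith
  have wt' : ∀ p, wt t A p ≤ t := by
    intro p; unfold wt; split_ifs <;> linarith
  have mup : Measurable (fun w : (i : A) → S => Function.updateFinset x A w) :=
    measurable_updateFinset
  refine vec_step P (Measure.pi fun _ : A => P)
    (fun w => Tbase H v (wt t A) (Function.updateFinset x A w))
    (fun s w => Tcoef H v (wt t A) (Function.updateFinset (Function.update x v s) A w)) ?_ ?_
    (n ^ (k - 1) * (t ^ (k - 1) * κ)) (#{i ∈ injTuples k n | i v.1 ≠ v.2} * (t ^ k * κ)) K r t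
    ?_ ?_ ?_ (by positivity) (by positivity) hK hrK hr ht0 ht
  · exact (sm_Tbase H hH v _).comp_measurable mup
  · refine (sm_Tcoef H hH v _).comp_measurable ?_
    simp_rw [comm]
    rw [measurable_pi_iff]
    intro p
    by_cases hp : p = v
    · subst hp; simp; fun_prop
    · simp only [Function.update_of_ne hp]
      exact (measurable_pi_apply p).comp (mup.comp measurable_snd)
  · intro w; exact norm_Tbase_le H v _ _ κ t ht0 w0 wt' hHκ
  · intro s w; exact norm_Tcoef_le H v _ _ κ t hκ ht0 w0 wt' hHκ
  · intro w
    simp_rw [comm]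
    exact integral_Tcoef P H hH κ hHκ hcan v _ _

lemma tensor [CompleteSpace B] [MeasurableSpace S] (P : Measure S) [IsProbabilityMeasure P]
    (H : (Fin k → S) → B) (hH : StronglyMeasurable H) (κ : ℝ) (hHκ : ∀ x, ‖H x‖ ≤ κ)
    (hκ : 0 ≤ κ)
    (hcan : ∀ (j : Fin k) (x : Fin k → S), (∫ y, H (Function.update x j y) ∂P) = 0)
    (K r t : ℝ) (hK : 0 < K) (hrK : r * (n ^ (k - 1) * (t ^ (k - 1) * κ)) ≤ K)
    (hr : 2 ≤ r) (ht0 : 0 ≤ t) (ht : t ^ 2 = 2 * r)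
    (s : Finset (Fin k × Fin n)) (x : Fin k × Fin n → S) :
    lmarginal (fun _ => P) s
      (fun x => (lmarginal (fun _ => P) sᶜ (fA H K t sᶜ) x) ^ (r / 2)) x ≤
      (lmarginal (fun _ => P) univ (fA H K t univ) x) ^ (r / 2) := by
  induction s using Finset.induction_on with
  | empty => simp
  | insert v s hv ih =>
    have hm : ∀ A : Finset (Fin k × Fin n), Measurable (fun x =>
        (lmarginal (fun _ => P) A (fA H K t A) x) ^ (r / 2)) := fun A =>
      ((measurable_fA H hH K t A).lmarginal (fun _ => P)).pow_const _
    rw [lmarginal_insert' _ (hm _) hv]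
    refine (lmarginal_mono (fun y => ?_) x).trans ih
    have hc : insert v (insert v s)ᶜ = sᶜ := by
      ext p; simp only [mem_insert, mem_compl]
      by_cases hp : p = v
      · subst hp; simp [hv]
      · simp [hp]
    have := step_A P H hH κ hHκ hκ hcan K r t hK hrK hr ht0 ht (insert v s)ᶜ v (by simp) y
    rw [hc] at this
    exact this

lemma tensor_final [CompleteSpace B] [MeasurableSpace S] [Nonempty S]
    (P : Measure S) [IsProbabilityMeasure P]
    (H : (Fin k → S) → B) (hH : StronglyMeasurable H) (κ : ℝ) (hHκ : ∀ x, ‖H x‖ ≤ κ)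
    (hκ : 0 ≤ κ)
    (hcan : ∀ (j : Fin k) (x : Fin k → S), (∫ y, H (Function.update x j y) ∂P) = 0)
    (K r t : ℝ) (hK : 0 < K) (hrK : r * (n ^ (k - 1) * (t ^ (k - 1) * κ)) ≤ K)
    (hr : 2 ≤ r) (ht0 : 0 ≤ t) (ht : t ^ 2 = 2 * r) :
    ∫⁻ ω : Fin k → Fin n → S, ENNReal.ofReal
        ((‖∑ i ∈ injTuples k n, H (fun j => ω j (i j))‖ + K) ^ 2) ^ (r / 2)
        ∂(Measure.pi fun _ : Fin k => (Measure.pi fun _ : Fin n => P)) ≤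
      (∫⁻ ω : Fin k → Fin n → S, ENNReal.ofReal
        ((t ^ k * ‖∑ i ∈ injTuples k n, H (fun j => ω j (i j))‖ + K) ^ 2)
        ∂(Measure.pi fun _ : Fin k => (Measure.pi fun _ : Fin n => P))) ^ (r / 2) := by
  have x : Fin k × Fin n → S := fun _ => Classical.arbitrary S
  have h := tensor P H hH κ hHκ hκ hcan K r t hK hrK hr ht0 ht (univ : Finset (Fin k × Fin n)) x
  rw [compl_univ, lmarginal_empty, lmarginal_univ, lmarginal_univ] at h
  have mp : Measure.map (MeasurableEquiv.curry (Fin k) (Fin n) S)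
      (Measure.pi fun _ : Fin k × Fin n => P)
      = Measure.pi fun _ : Fin k => (Measure.pi fun _ : Fin n => P) := by
    have := Measure.infinitePi_map_curry (fun (_ : Fin k) (_ : Fin n) => P)
    simpa only [Measure.infinitePi_eq_pi] using this
  rw [← mp, lintegral_map_equiv, lintegral_map_equiv]
  refine le_trans (le_of_eq ?_) (h.trans (le_of_eq ?_))
  · apply lintegral_congr
    intro ω
    simp [fA, Tsum, wt, MeasurableEquiv.coe_curry, Function.curry]
  · congr 1
    apply lintegral_congr
    intro ω
    have : Tsum H (wt t univ) ω = t ^ k • ∑ i ∈ injTuples k n, H (fun j => ω (j, i j)) := by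
      simp [Tsum, wt, Finset.smul_sum]
    rw [fA, this, norm_smul, Real.norm_of_nonneg (by positivity)]
    rfl

end

lemma stmt2_aux {k n : ℕ} (hk : 1 ≤ k) {S B : Type} [NormedAddCommGroup B] [NormedSpace ℝ B]
    [CompleteSpace B] [MeasurableSpace S] [Nonempty S]
    (P : Measure S) [IsProbabilityMeasure P]
    (H : (Fin k → S) → B) (hH : StronglyMeasurable H) (κ χ : ℝ) (hHκ : ∀ x, ‖H x‖ ≤ κ)
    (hκ : 0 < κ) (hn : 0 < n)
    (hcan : ∀ (j : Fin k) (x : Fin k → S), (∫ y, H (Function.update x j y) ∂P) = 0)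
    (hχ : Real.sqrt (∫ ω : Fin k → Fin n → S,
            ‖∑ i ∈ injTuples k n, H (fun j => ω j (i j))‖ ^ 2
          ∂(Measure.pi fun _ : Fin k => (Measure.pi fun _ : Fin n => P))) ≤ χ)
    (r : ℝ) (hr : 2 ≤ r) :
    (∫ ω : Fin k → Fin n → S,
            ‖∑ i ∈ injTuples k n, H (fun j => ω j (i j))‖ ^ r
          ∂(Measure.pi fun _ : Fin k => (Measure.pi fun _ : Fin n => P))) ≤
        (4 * 2 ^ k : ℝ) ^ r * (r ^ ((k : ℝ) * r / 2) * χ ^ r +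
          r ^ (((k : ℝ) + 1) * r / 2) * (n : ℝ) ^ (((k : ℝ) - 1) * r) * κ ^ r) := by
  have hr0 : 0 < r := by linarith
  set t := Real.sqrt (2 * r) with ht
  have ht2 : t ^ 2 = 2 * r := Real.sq_sqrt (by linarith)
  have ht0 : 0 < t := Real.sqrt_pos.2 (by linarith)
  have hn' : (0 : ℝ) < n := by exact_mod_cast hn
  have hχ0 : 0 ≤ χ := (Real.sqrt_nonneg _).trans hχ
  set K : ℝ := r * (n ^ (k - 1) * (t ^ (k - 1) * κ)) with hKd
  have hK : 0 < K := by positivity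
  have main := tensor_final (n := n) P H hH κ hHκ hκ.le hcan K r t hK le_rfl hr ht0.le ht2
  set μ := (Measure.pi fun _ : Fin k => (Measure.pi fun _ : Fin n => P)) with hμ
  set X : (Fin k → Fin n → S) → ℝ := fun ω => ‖∑ i ∈ injTuples k n, H (fun j => ω j (i j))‖
    with hX
  have mX : Measurable X := by
    have : StronglyMeasurable
        (fun ω : Fin k → Fin n → S => ∑ i ∈ injTuples k n, H (fun j => ω j (i j))) :=
      Finset.stronglyMeasurable_fun_sum _ fun i _ => hH.comp_measurable (by fun_prop)
    exact this.norm.measurable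
  have X0 : ∀ ω, 0 ≤ X ω := fun ω => norm_nonneg _
  set N : ℝ := #(injTuples k n) * κ with hN
  have XN : ∀ ω, X ω ≤ N := fun ω => by
    refine (norm_sum_le_of_le _ fun i _ => hHκ _).trans ?_
    rw [Finset.sum_const, nsmul_eq_mul]
  have N0 : 0 ≤ N := by positivity
  have iX2 : Integrable (fun ω => X ω ^ 2) μ :=
    Integrable.of_bound (mX.pow_const 2).aestronglyMeasurable (N ^ 2)
      (Filter.Eventually.of_forall fun ω => by
        rw [Real.norm_of_nonneg (sq_nonneg _)]
        exact pow_le_pow_left₀ (X0 ω) (XN ω) 2)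
  have iXr : Integrable (fun ω => X ω ^ r) μ :=
    Integrable.of_bound (mX.pow_const r).aestronglyMeasurable (N ^ r)
      (Filter.Eventually.of_forall fun ω => by
        rw [Real.norm_of_nonneg (Real.rpow_nonneg (X0 ω) r)]
        exact Real.rpow_le_rpow (X0 ω) (XN ω) hr0.le)
  have hχ2 : ∫ ω, X ω ^ 2 ∂μ ≤ χ ^ 2 := (Real.sqrt_le_left hχ0).1 hχ
  -- right-hand side
  have R : ∫⁻ ω, ENNReal.ofReal ((t ^ k * X ω + K) ^ 2) ∂μ ≤
      ENNReal.ofReal ((2 * (t ^ k * χ + K)) ^ 2) := by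
    calc ∫⁻ ω, ENNReal.ofReal ((t ^ k * X ω + K) ^ 2) ∂μ
        ≤ ∫⁻ ω, ENNReal.ofReal (2 * (t ^ k) ^ 2 * X ω ^ 2 + 2 * K ^ 2) ∂μ := by
          apply lintegral_mono
          intro ω
          apply ENNReal.ofReal_le_ofReal
          nlinarith [sq_nonneg (t ^ k * X ω - K)]
      _ = ENNReal.ofReal (∫ ω, (2 * (t ^ k) ^ 2 * X ω ^ 2 + 2 * K ^ 2) ∂μ) := by
          rw [ofReal_integral_eq_lintegral_ofReal]
          · exact (iX2.const_mul _).add (integrable_const _)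
          · exact Filter.Eventually.of_forall fun ω => by positivity
      _ ≤ _ := by
          apply ENNReal.ofReal_le_ofReal
          rw [integral_add (iX2.const_mul _) (integrable_const _), integral_const_mul]
          simp only [integral_const, probReal_univ, one_smul]
          have h1 : 2 * (t ^ k) ^ 2 * ∫ ω, X ω ^ 2 ∂μ ≤ 2 * (t ^ k) ^ 2 * χ ^ 2 :=
            mul_le_mul_of_nonneg_left hχ2 (by positivity)
          have h2 : 0 ≤ t ^ k * χ * K := by positivity
          nlinarith [sq_nonneg (t ^ k * χ), sq_nonneg K]
  have pw : ∀ y : ℝ, 0 ≤ y → (y ^ 2) ^ (r / 2) = y ^ r := by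
    intro y hy
    rw [← Real.rpow_natCast, ← Real.rpow_mul hy]
    congr 1; push_cast; ring
  have F : ∫ ω, X ω ^ r ∂μ ≤ (2 * (t ^ k * χ + K)) ^ r := by
    have hpos : 0 ≤ 2 * (t ^ k * χ + K) := by positivity
    have : ENNReal.ofReal (∫ ω, X ω ^ r ∂μ) ≤ ENNReal.ofReal ((2 * (t ^ k * χ + K)) ^ r) := by
      rw [ofReal_integral_eq_lintegral_ofReal iXr
        (Filter.Eventually.of_forall fun ω => Real.rpow_nonneg (X0 ω) r)]
      calc ∫⁻ ω, ENNReal.ofReal (X ω ^ r) ∂μ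
          ≤ ∫⁻ ω, ENNReal.ofReal ((X ω + K) ^ 2) ^ (r / 2) ∂μ := by
            apply lintegral_mono
            intro ω
            have hXK : 0 ≤ X ω + K := add_nonneg (X0 ω) hK.le
            simp only
            rw [ENNReal.ofReal_rpow_of_nonneg (sq_nonneg _) (by linarith), pw _ hXK]
            apply ENNReal.ofReal_le_ofReal
            exact Real.rpow_le_rpow (X0 ω) (by linarith) hr0.le
        _ ≤ (∫⁻ ω, ENNReal.ofReal ((t ^ k * X ω + K) ^ 2) ∂μ) ^ (r / 2) := main
        _ ≤ (ENNReal.ofReal ((2 * (t ^ k * χ + K)) ^ 2)) ^ (r / 2) :=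
            ENNReal.rpow_le_rpow R (by linarith)
        _ = _ := by
            rw [ENNReal.ofReal_rpow_of_nonneg (sq_nonneg _) (by linarith), pw _ hpos]
    exact (ENNReal.ofReal_le_ofReal_iff (Real.rpow_nonneg hpos r)).1 this
  refine F.trans ?_
  -- arithmetic
  have tp : ∀ m : ℕ, (t ^ m) ^ r = 2 ^ ((m : ℝ) * r / 2) * r ^ ((m : ℝ) * r / 2) := by
    intro m
    rw [ht, Real.sqrt_eq_rpow, ← Real.rpow_natCast, ← Real.rpow_mul (by positivity),
      ← Real.rpow_mul (by positivity), Real.mul_rpow (by norm_num) hr0.le]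
    congr 2 <;> ring
  have two : ∀ m : ℕ, m ≤ k → (2 : ℝ) ^ ((m : ℝ) * r / 2) ≤ (2 ^ k : ℝ) ^ r := by
    intro m hm
    rw [← Real.rpow_natCast 2 k, ← Real.rpow_mul (by norm_num)]
    apply Real.rpow_le_rpow_of_exponent_le (by norm_num)
    have : (m : ℝ) ≤ k := by exact_mod_cast hm
    nlinarith [mul_le_mul_of_nonneg_right this hr0.le, mul_nonneg (Nat.cast_nonneg (α := ℝ) k) hr0.le]
  have h1 : (t ^ k * χ) ^ r ≤ (2 ^ k : ℝ) ^ r * (r ^ ((k : ℝ) * r / 2) * χ ^ r) := by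
    rw [Real.mul_rpow (by positivity) hχ0, tp, mul_assoc]
    exact mul_le_mul_of_nonneg_right (two k le_rfl) (by positivity)
  have hk1 : ((k - 1 : ℕ) : ℝ) = (k : ℝ) - 1 := by push_cast [hk]; ring
  have h2 : K ^ r ≤ (2 ^ k : ℝ) ^ r *
      (r ^ (((k : ℝ) + 1) * r / 2) * (n : ℝ) ^ (((k : ℝ) - 1) * r) * κ ^ r) := by
    have e : K ^ r = 2 ^ (((k - 1 : ℕ) : ℝ) * r / 2) *
        (r ^ (((k : ℝ) + 1) * r / 2) * (n : ℝ) ^ (((k : ℝ) - 1) * r) * κ ^ r) := by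
      rw [hKd, Real.mul_rpow (by positivity) (by positivity),
        Real.mul_rpow (by positivity) (by positivity),
        Real.mul_rpow (by positivity) (by positivity), tp, ← Real.rpow_natCast (n : ℝ),
        ← Real.rpow_mul hn'.le, hk1]
      have : r ^ (((k : ℝ) + 1) * r / 2) = r ^ r * r ^ (((k : ℝ) - 1) * r / 2) := by
        rw [← Real.rpow_add hr0]; congr 1; ring
      rw [this]; ring
    rw [e]
    exact mul_le_mul_of_nonneg_right (two _ (Nat.sub_le _ _)) (by positivity)
  have h3 : (t ^ k * χ + K) ^ r ≤ 2 ^ r * ((t ^ k * χ) ^ r + K ^ r) := by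
    have hA : 0 ≤ t ^ k * χ := by positivity
    have hA' := Real.rpow_nonneg hA r
    have hB' := Real.rpow_nonneg hK.le r
    have h2r : (0 : ℝ) ≤ 2 ^ r := by positivity
    rcases le_total (t ^ k * χ) K with h | h
    · calc (t ^ k * χ + K) ^ r ≤ (2 * K) ^ r :=
            Real.rpow_le_rpow (by positivity) (by linarith) hr0.le
        _ = 2 ^ r * K ^ r := Real.mul_rpow (by norm_num) hK.le
        _ ≤ _ := mul_le_mul_of_nonneg_left (by linarith) h2r
    · calc (t ^ k * χ + K) ^ r ≤ (2 * (t ^ k * χ)) ^ r :=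
            Real.rpow_le_rpow (by positivity) (by linarith) hr0.le
        _ = 2 ^ r * (t ^ k * χ) ^ r := Real.mul_rpow (by norm_num) hA
        _ ≤ _ := mul_le_mul_of_nonneg_left (by linarith) h2r
  have h4 : (4 * 2 ^ k : ℝ) ^ r = 2 ^ r * 2 ^ r * (2 ^ k : ℝ) ^ r := by
    rw [← Real.mul_rpow (by norm_num) (by norm_num), ← Real.mul_rpow (by norm_num) (by positivity)]
    norm_num
  rw [Real.mul_rpow (by norm_num) (by positivity), h4]
  calc (2 : ℝ) ^ r * (t ^ k * χ + K) ^ r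
      ≤ 2 ^ r * (2 ^ r * ((t ^ k * χ) ^ r + K ^ r)) := by gcongr
    _ ≤ 2 ^ r * (2 ^ r * ((2 ^ k : ℝ) ^ r * (r ^ ((k : ℝ) * r / 2) * χ ^ r) + (2 ^ k : ℝ) ^ r *
      (r ^ (((k : ℝ) + 1) * r / 2) * (n : ℝ) ^ (((k : ℝ) - 1) * r) * κ ^ r))) := by gcongr
    _ = _ := by ring

/-- (Theorem 10, decoupled moment inequality.) Let `B` be a separable Banach
space, `H : S^k → B` bounded, symmetric and `P`-canonical, and let `X_i^{(j)}` be a decoupled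
i.i.d. array with law `P`. If `κ ≥ sup ‖H‖` and `χ_n ≥ (E‖Σ_{i ∈ I_n^k}
H(X_{i_1}^{(1)},…,X_{i_k}^{(k)})‖²)^{1/2}`, then there is a constant `C` depending only on
`k` such that for all `n` and `r ≥ 2`,
`E‖Σ_{i ∈ I_n^k} H(X_{i_1}^{(1)},…,X_{i_k}^{(k)})‖^r
  ≤ C^r [r^{kr/2} χ_n^r + r^{(k+1)r/2} n^{(k−1)r} κ^r + r^{kr} κ^r]`. -/
theorem stmt2 (k : ℕ) (hk : 1 ≤ k) :
    ∃ C : ℝ, 0 < C ∧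
      ∀ (B : Type) [NormedAddCommGroup B] [NormedSpace ℝ B] [CompleteSpace B]
        [SecondCountableTopology B],
      ∀ (S : Type) (_ : MeasurableSpace S), Nonempty S →
      ∀ (P : Measure S), IsProbabilityMeasure P →
      ∀ H : (Fin k → S) → B, StronglyMeasurable H →
        (∀ (τ : Equiv.Perm (Fin k)) (x : Fin k → S), H (x ∘ τ) = H x) →
        (∀ (j : Fin k) (x : Fin k → S), (∫ y, H (Function.update x j y) ∂P) = 0) →
      ∀ (n : ℕ) (κ χ : ℝ),
        (∀ x, ‖H x‖ ≤ κ) →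
        Real.sqrt (∫ ω : Fin k → Fin n → S,
            ‖∑ i ∈ injTuples k n, H (fun j => ω j (i j))‖ ^ 2
          ∂(Measure.pi fun _ : Fin k => (Measure.pi fun _ : Fin n => P))) ≤ χ →
      ∀ r : ℝ, 2 ≤ r →
        (∫ ω : Fin k → Fin n → S,
            ‖∑ i ∈ injTuples k n, H (fun j => ω j (i j))‖ ^ r
          ∂(Measure.pi fun _ : Fin k => (Measure.pi fun _ : Fin n => P))) ≤
        C ^ r * (r ^ ((k : ℝ) * r / 2) * χ ^ r +
          r ^ (((k : ℝ) + 1) * r / 2) * (n : ℝ) ^ (((k : ℝ) - 1) * r) * κ ^ r +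
          r ^ ((k : ℝ) * r) * κ ^ r) := by
  refine ⟨4 * 2 ^ k, by positivity, ?_⟩
  intro B _ _ _ _ S _ hS P hP H hH _ hcan n κ χ hκ hχ r hr
  have hr0 : 0 < r := by linarith
  have hχ0 : 0 ≤ χ := (Real.sqrt_nonneg _).trans hχ
  have hκ0 : 0 ≤ κ := (norm_nonneg _).trans (hκ fun _ => Classical.arbitrary S)
  by_cases hdeg : 0 < κ ∧ 0 < n
  · refine (stmt2_aux hk P H hH κ χ hκ hdeg.1 hdeg.2 hcan hχ r hr).trans ?_
    apply mul_le_mul_of_nonneg_left _ (by positivity)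
    have : 0 ≤ r ^ ((k : ℝ) * r) * κ ^ r := by positivity
    linarith
  · have hz : ∀ ω : Fin k → Fin n → S, ∑ i ∈ injTuples k n, H (fun j => ω j (i j)) = 0 := by
      intro ω
      apply Finset.sum_eq_zero
      intro i _
      by_cases h : 0 < κ
      · have hn : n = 0 := by
          by_contra hn
          exact hdeg ⟨h, Nat.pos_of_ne_zero hn⟩
        subst hn
        exact (i ⟨0, hk⟩).elim0
      · have := hκ (fun j => ω j (i j))
        exact norm_le_zero_iff.1 (by linarith)
    simp_rw [hz]
    rw [norm_zero, Real.zero_rpow hr0.ne']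
    simp only [integral_zero]
    positivity
end
end
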